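/- arXiv:1512.09174 — 2 statements merged into one kernel-verified Lean document; each statement's English description precedes it below -/
import Mathlib

section
/- Given reals a, c, δ, γ > 0 satisfying (i) c < min(a, δ), (ii) γ ≥ 4a and γ > δ, (iii) δ + (c/δ)·γ ≤ a, suppose f is continuously differentiable, satisfies (H) and (H''), is constant on [ρ, ∞) for some ρ > 0, and satisfies (1/γ)·∫₀^a |f(s)| ds < a - c. Then the equation x'(t) = f(x(t-1)) has a Kaplan–Yorke solution x with max_{t∈ℝ} x(t) > 2a - c. If moreover f'(0) > -π/2, then the equation also has a Kaplan–Yorke solution y with max_{t∈ℝ} y(t) < 2a - c. -/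
open Set Filter

/-- Hypotheses (H): `f` is continuous, satisfies the negative feedback condition,
and is differentiable on a neighborhood of `0` with `f'(0) < 0`. -/
def HypH (f : ℝ → ℝ) : Prop :=
  Continuous f ∧ (∀ x : ℝ, x ≠ 0 → x * f x < 0) ∧
    (∀ᶠ y in nhds (0 : ℝ), DifferentiableAt ℝ f y) ∧ deriv f 0 < 0

/-- A solution on `[-1,∞)` of the delay equation `x'(t) = f (x (t-1))`. -/
def IsSolOn (f x : ℝ → ℝ) : Prop :=
  ContinuousOn x (Ici (-1)) ∧ ∀ t : ℝ, 0 < t → HasDerivAt x (f (x (t - 1))) t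

/-- Membership in the set `K`: `φ(-1) = 0`, `φ` nondecreasing on `[-1,0]`,
continuous there, and `|φ| ≤ M`. -/
def MemK (M : ℝ) (φ : ℝ → ℝ) : Prop :=
  ContinuousOn φ (Icc (-1) 0) ∧ φ (-1) = 0 ∧ MonotoneOn φ (Icc (-1) 0) ∧
    ∀ s ∈ Icc (-1 : ℝ) 0, |φ s| ≤ M

/-- `T` is the minimal (positive) period of `p`. -/
def MinPeriod {α : Type*} (p : ℝ → α) (T : ℝ) : Prop :=
  0 < T ∧ (∀ t, p (t + T) = p t) ∧
    ∀ T' : ℝ, 0 < T' → (∀ t, p (t + T') = p t) → T ≤ T'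

/-- A slowly oscillating periodic (SOP) solution of `x'(t) = f (x (t-1))`:
a nonconstant periodic differentiable solution any two of whose distinct
zeros are separated by more than `1`. -/
def IsSOP (f p : ℝ → ℝ) : Prop :=
  (∀ t : ℝ, HasDerivAt p (f (p (t - 1))) t) ∧
    (∃ T : ℝ, 0 < T ∧ ∀ t, p (t + T) = p t) ∧
    (∃ t s : ℝ, p t ≠ p s) ∧
    ∀ z z' : ℝ, p z = 0 → p z' = 0 → z ≠ z' → 1 < |z - z'|

/-- A Kaplan–Yorke solution: an SOP solution of minimal period `4`
satisfying `x(t) = -x(t-2)`. -/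
def IsKY (f x : ℝ → ℝ) : Prop :=
  IsSOP f x ∧ MinPeriod x 4 ∧ ∀ t : ℝ, x t = -x (t - 2)

/-- Hypotheses (H') with constants `μ, β, σ`. -/
def HypH' (f : ℝ → ℝ) (μ β σ : ℝ) : Prop :=
  (∀ x : ℝ, |f x| ≤ μ) ∧ ∀ x : ℝ, β ≤ |x| → σ ≤ |f x|

/-- Hypotheses (H'') with constants `a, c, δ, γ`. -/
def HypH'' (f : ℝ → ℝ) (a c δ γ : ℝ) : Prop :=
  (∀ x : ℝ, f (-x) = -f x) ∧ (∀ x ∈ Icc (0 : ℝ) (2 * a), |f x| ≤ γ) ∧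
    (∀ x ∈ Icc a (2 * a - c), f x = -γ) ∧ ∀ x ∈ Icc (2 * a) γ, f x = -δ

/-- The minimal period of `p` equals `z'' - z` for three consecutive zeros
`z < z' < z''` of `p`. -/
def PeriodThreeZeros (p : ℝ → ℝ) : Prop :=
  ∃ z z' z'' : ℝ, z < z' ∧ z' < z'' ∧ p z = 0 ∧ p z' = 0 ∧ p z'' = 0 ∧
    (∀ t, t ∈ Ioo z z' ∪ Ioo z' z'' → p t ≠ 0) ∧ MinPeriod p (z'' - z)

/-!
A solution with `x (t) = -x (t - 2)` and its delay `y (t) = x (t - 1)` solve the planar Hamiltonian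
system `x' = f y`, `y' = -f x`. This system is invariant under rotation by a right angle, and under
reflection in the diagonal combined with time reversal. By uniqueness of solutions, an orbit that
starts at `(m, 0)` and meets the diagonal at time `1 / 2`, an eighth of its period, is therefore
the phase curve of a Kaplan–Yorke solution with maximum `m`.

The polar angle `θ m` of the orbit at time `1 / 2` depends continuously on `m > 0`, so it suffices
to find amplitudes where `θ m` lies on either side of `π / 4`.
* For `m = 2 a - c` it exceeds `π / 4`. Otherwise the orbit stays in `0 ≤ y ≤ x ≤ m` up to time
  `1 / 2`, and there the integral condition and conservation of energy force `x > a`. Hence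
  `y' = γ` throughout, and `y (1 / 2) = γ / 2 > m`, a contradiction.
* For large `m` it is below `π / 4`, because the system moves at bounded speed.
* For small `m` it is below `π / 4` if `f' 0 > -(π / 2)`, because the angular speed of a small orbit
  is below `π / 2`.
-/

open scoped NNReal ComplexConjugate Topology Real

/-! ### Lipschitz vector fields -/

section LipschitzVectorField

variable {E : Type*} [NormedAddCommGroup E] [NormedSpace ℝ E] {v : E → E} {K : ℝ≥0}

lemma exists_hasDerivAt_Ioo_of_lipschitzWith_of_bounded [CompleteSpace E] (hK : LipschitzWith K v)
    {L : ℝ≥0} (hL : ∀ x, ‖v x‖ ≤ L) (x₀ : E) (T : ℝ≥0) :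
    ∃ γ : ℝ → E, γ 0 = x₀ ∧ ∀ t ∈ Ioo (-T : ℝ) T, HasDerivAt γ (v (γ t)) t := by
  have picard : IsPicardLindelof (fun _ => v) (⟨0, by simp⟩ : Icc (-T : ℝ) T) x₀ (L * T) 0 L K :=
    { lipschitzOnWith := fun _ _ => hK.lipschitzOnWith
      continuousOn := fun _ _ => continuousOn_const
      norm_le := fun _ _ x _ => hL x
      mul_max_le := by simp }
  obtain ⟨γ, h0, hγ⟩ := picard.exists_eq_forall_mem_Icc_hasDerivWithinAt₀
  exact ⟨γ, h0, fun t ht =>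
    (hγ t (Ioo_subset_Icc_self ht)).hasDerivAt (Icc_mem_nhds ht.1 ht.2)⟩

lemma exists_isIntegralCurve_of_lipschitzWith_of_bounded [CompleteSpace E]
    (hK : LipschitzWith K v) {L : ℝ≥0} (hL : ∀ x, ‖v x‖ ≤ L) (x₀ : E) :
    ∃ γ : ℝ → E, γ 0 = x₀ ∧ IsIntegralCurve γ fun _ => v := by
  choose γ h0 hγ using exists_hasDerivAt_Ioo_of_lipschitzWith_of_bounded hK hL x₀
  have agree : ∀ (T T' : ℝ≥0) (s : ℝ), |s| < T → |s| < T' → γ T s = γ T' s := by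
    intro T T' s hT hT'
    have hs : |s| < min (T : ℝ) T' := lt_min hT hT'
    have hpos := (abs_nonneg s).trans_lt hs
    refine ODE_solution_unique_of_mem_Ioo (v := fun _ => v) (s := fun _ => univ)
      (fun _ _ => hK.lipschitzOnWith) ⟨neg_lt_zero.2 hpos, hpos⟩
      (fun t ht => ⟨hγ T t ?_, trivial⟩) (fun t ht => ⟨hγ T' t ?_, trivial⟩)
      ((h0 T).trans (h0 T').symm) (abs_lt.1 hs)
    · exact abs_lt.1 ((abs_lt.2 ht).trans_le (min_le_left _ _))
    · exact abs_lt.1 ((abs_lt.2 ht).trans_le (min_le_right _ _))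
  have lt_radius : ∀ s : ℝ, |s| < (‖s‖₊ + 1 : ℝ≥0) := fun s => by simp
  refine ⟨fun t => γ (‖t‖₊ + 1) t, h0 _, fun t => ?_⟩
  refine (hγ _ t (abs_lt.1 (lt_radius t))).congr_of_eventuallyEq ?_
  filter_upwards [(isOpen_lt continuous_abs continuous_const).mem_nhds (lt_radius t)] with s hs
  exact agree _ _ s (lt_radius s) hs

lemma eq_of_isIntegralCurve_of_lipschitzWith (hK : LipschitzWith K v) {γ γ' : ℝ → E}
    (hγ : IsIntegralCurve γ fun _ => v) (hγ' : IsIntegralCurve γ' fun _ => v) (t₀ : ℝ)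
    (h : γ t₀ = γ' t₀) : γ = γ' :=
  ODE_solution_unique_univ (v := fun _ => v) (s := fun _ => univ) (fun _ => hK.lipschitzOnWith)
    (fun t => ⟨hγ t, trivial⟩) (fun t => ⟨hγ' t, trivial⟩) h

lemma continuous_apply_of_isIntegralCurve {X : Type*} [TopologicalSpace X]
    (hK : LipschitzWith K v) {γ : X → ℝ → E} (hγ : ∀ p, IsIntegralCurve (γ p) fun _ => v)
    (h0 : Continuous fun p => γ p 0) {t : ℝ} (ht : 0 ≤ t) : Continuous fun p => γ p t := by
  have gronwall : ∀ p q, dist (γ p t) (γ q t) ≤ dist (γ p 0) (γ q 0) * Real.exp (K * (t - 0)) :=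
    fun p q => dist_le_of_trajectories_ODE (v := fun _ => v) (fun _ => hK)
      (hγ p).continuous.continuousOn (fun s _ => (hγ p s).hasDerivWithinAt)
      (hγ q).continuous.continuousOn (fun s _ => (hγ q s).hasDerivWithinAt) le_rfl t ⟨ht, le_rfl⟩
  refine continuous_iff_continuousAt.2 fun p => tendsto_iff_dist_tendsto_zero.2 ?_
  refine squeeze_zero (fun _ => dist_nonneg) (fun q => gronwall q p) ?_
  simpa using (tendsto_iff_dist_tendsto_zero.1 h0.continuousAt).mul_const
    (Real.exp (K * (t - 0)))

end LipschitzVectorField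

/-! ### Polar coordinates along a curve -/

lemma eq_mul_exp_integral_div {z z' : ℝ → ℂ} (hz : ∀ t, HasDerivAt z (z' t) t)
    (hz' : Continuous z') (hne : ∀ t, z t ≠ 0) (t : ℝ) :
    z t = z 0 * Complex.exp (∫ s in (0 : ℝ)..t, z' s / z s) := by
  have hzc : Continuous z := continuous_iff_continuousAt.2 fun t => (hz t).continuousAt
  have hlog : ∀ t, HasDerivAt (fun t => ∫ s in (0 : ℝ)..t, z' s / z s) (z' t / z t) t :=
    fun t => ((hz'.div hzc hne).integral_hasStrictDerivAt 0 t).hasDerivAt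
  have hconst : ∀ t, HasDerivAt
      (fun t => z t * Complex.exp (-∫ s in (0 : ℝ)..t, z' s / z s)) 0 t := fun t => by
    refine ((hz t).mul (hlog t).neg.cexp).congr_deriv ?_
    field_simp [hne t]
    ring
  have h := is_const_of_deriv_eq_zero (fun t => (hconst t).differentiableAt)
    (fun t => (hconst t).deriv) t 0
  simp only [intervalIntegral.integral_same, neg_zero, Complex.exp_zero, mul_one] at h
  rw [← h, mul_assoc, ← Complex.exp_add, neg_add_cancel, Complex.exp_zero, mul_one]

lemma eq_norm_mul_exp_integral_im_div {z z' : ℝ → ℂ} (hz : ∀ t, HasDerivAt z (z' t) t)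
    (hz' : Continuous z') (hne : ∀ t, z t ≠ 0) (h0 : z 0 = ‖z 0‖) (t : ℝ) :
    z t = ‖z t‖ * Complex.exp ((∫ s in (0 : ℝ)..t, (z' s / z s).im : ℝ) * Complex.I) := by
  have hzc : Continuous z := continuous_iff_continuousAt.2 fun t => (hz t).continuousAt
  have him : ∫ s in (0 : ℝ)..t, (z' s / z s).im = (∫ s in (0 : ℝ)..t, z' s / z s).im :=
    Complex.imCLM.intervalIntegral_comp_comm ((hz'.div hzc hne).intervalIntegrable 0 t)
  have hexp := eq_mul_exp_integral_div hz hz' hne t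
  rw [him, hexp, norm_mul, Complex.norm_exp, h0]
  set w := ∫ s in (0 : ℝ)..t, z' s / z s
  conv_lhs => rw [← Complex.re_add_im w, Complex.exp_add]
  simp [mul_assoc]

/-! ### The planar Hamiltonian system -/

/-- The negative feedback condition `x f(x) < 0` for `x ≠ 0`. -/
def NegativeFeedback (f : ℝ → ℝ) : Prop :=
  ∀ x : ℝ, x ≠ 0 → x * f x < 0

lemma NegativeFeedback.neg_of_pos {f : ℝ → ℝ} (hneg : NegativeFeedback f) {x : ℝ} (hx : 0 < x) :
    f x < 0 :=
  (pos_iff_neg_of_mul_neg (hneg x hx.ne')).1 hx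

/-- The vector field of the system `x' = f y`, `y' = -f x` satisfied by a Kaplan–Yorke solution
`x` together with its delay `y = x (· - 1)`. The phase plane is identified with `ℂ` through
`z = x + i y`. -/
def planarField (f : ℝ → ℝ) (z : ℂ) : ℂ := ⟨f z.im, -f z.re⟩

section PlanarField

variable {f : ℝ → ℝ} {K : ℝ≥0}

@[simp] lemma planarField_re (z : ℂ) : (planarField f z).re = f z.im := rfl

@[simp] lemma planarField_im (z : ℂ) : (planarField f z).im = -f z.re := rfl

lemma planarField_zero (h0 : f 0 = 0) : planarField f 0 = 0 := by
  apply Complex.ext <;> simp [h0]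

lemma planarField_I_mul (hodd : f.Odd) (z : ℂ) :
    planarField f (Complex.I * z) = Complex.I * planarField f z := by
  apply Complex.ext <;> simp [hodd _]

lemma planarField_I_mul_conj (z : ℂ) :
    planarField f (Complex.I * conj z) = -(Complex.I * conj (planarField f z)) := by
  apply Complex.ext <;> simp

lemma continuous_planarField (hf : Continuous f) : Continuous (planarField f) :=
  Complex.equivRealProdCLM.symm.continuous.comp
    (by fun_prop : Continuous fun z : ℂ => (f z.im, -f z.re))

lemma lipschitzWith_planarField (hK : LipschitzWith K f) : LipschitzWith K (planarField f) := by
  refine LipschitzWith.of_dist_le_mul fun z w => ?_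
  have hsq : ∀ x y : ℝ, (f x - f y) ^ 2 ≤ K ^ 2 * (x - y) ^ 2 := fun x y => by
    have := hK.norm_sub_le x y
    rw [← mul_pow, sq_le_sq, abs_mul, abs_of_nonneg K.coe_nonneg]
    exact this
  rw [Complex.dist_eq_re_im, Complex.dist_eq_re_im]
  refine Real.sqrt_le_iff.2 ⟨by positivity, ?_⟩
  rw [mul_pow, Real.sq_sqrt (by positivity)]
  simp only [planarField_re, planarField_im]
  linarith [hsq z.re w.re, hsq z.im w.im]

lemma norm_planarField_le {L : ℝ} (hL : ∀ x, |f x| ≤ L) (z : ℂ) : ‖planarField f z‖ ≤ 2 * L := by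
  refine (Complex.norm_le_abs_re_add_abs_im _).trans ?_
  rw [planarField_re, planarField_im, abs_neg]
  linarith [hL z.im, hL z.re]

/-- The rate of change of the argument of `z` along the planar system. -/
noncomputable def angularSpeed (f : ℝ → ℝ) (z : ℂ) : ℝ := (planarField f z / z).im

lemma angularSpeed_eq_div_normSq (z : ℂ) :
    angularSpeed f z = (-(z.re * f z.re) - z.im * f z.im) / Complex.normSq z := by
  rw [angularSpeed, Complex.div_im, planarField_re, planarField_im]
  ring

lemma angularSpeed_pos (hneg : NegativeFeedback f) {z : ℂ} (hz : z ≠ 0) :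
    0 < angularSpeed f z := by
  rw [angularSpeed_eq_div_normSq]
  refine div_pos ?_ (Complex.normSq_pos.2 hz)
  have hle : ∀ x, x * f x ≤ 0 := fun x => by
    rcases eq_or_ne x 0 with rfl | hx
    · simp
    · exact (hneg x hx).le
  rcases eq_or_ne z.re 0 with hre | hre
  · have him : z.im ≠ 0 := fun him => hz (Complex.ext hre him)
    linarith [hle z.re, hneg z.im him]
  · linarith [hneg z.re hre, hle z.im]

lemma angularSpeed_le {k : ℝ} {z : ℂ} (hz : z ≠ 0) (hre : -(z.re * f z.re) ≤ k * z.re ^ 2)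
    (him : -(z.im * f z.im) ≤ k * z.im ^ 2) : angularSpeed f z ≤ k := by
  rw [angularSpeed_eq_div_normSq, div_le_iff₀ (Complex.normSq_pos.2 hz), Complex.normSq_apply]
  linarith

lemma abs_angularSpeed_le_norm_div_norm (z : ℂ) :
    |angularSpeed f z| ≤ ‖planarField f z‖ / ‖z‖ :=
  (Complex.abs_im_le_norm _).trans_eq (norm_div _ _)

lemma abs_angularSpeed_le_of_lipschitzWith (hK : LipschitzWith K f) (h0 : f 0 = 0) (z : ℂ) :
    |angularSpeed f z| ≤ K := by
  have hlin : ‖planarField f z‖ ≤ K * ‖z‖ := by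
    simpa [planarField_zero h0] using (lipschitzWith_planarField hK).norm_sub_le z 0
  exact (abs_angularSpeed_le_norm_div_norm z).trans
    (div_le_of_le_mul₀ (norm_nonneg z) K.coe_nonneg hlin)

lemma continuousAt_angularSpeed (hf : Continuous f) {z : ℂ} (hz : z ≠ 0) :
    ContinuousAt (angularSpeed f) z :=
  Complex.continuous_im.continuousAt.comp
    ((continuous_planarField hf).continuousAt.div continuousAt_id hz)

end PlanarField

/-! ### Conservation of energy -/

/-- The potential of the restoring force `f`: `potential f x + potential f y` is the Hamiltonian
of the planar system. -/
noncomputable def potential (f : ℝ → ℝ) (x : ℝ) : ℝ := ∫ s in (0 : ℝ)..x, -f s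

section Potential

variable {f : ℝ → ℝ}

lemma hasDerivAt_potential (hf : Continuous f) (x : ℝ) : HasDerivAt (potential f) (-f x) x :=
  (hf.neg.integral_hasStrictDerivAt 0 x).hasDerivAt

lemma potential_neg (hodd : f.Odd) (x : ℝ) : potential f (-x) = potential f x := by
  have h := intervalIntegral.integral_comp_neg (a := 0) (b := -x) fun s => -f s
  simp only [hodd _, neg_neg, neg_zero] at h
  rw [potential, intervalIntegral.integral_neg, h, intervalIntegral.integral_symm, neg_neg]
  rfl

lemma potential_abs (hodd : f.Odd) (x : ℝ) : potential f |x| = potential f x := by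
  rcases abs_choice x with h | h <;> rw [h]
  exact potential_neg hodd x

lemma strictMonoOn_potential (hf : Continuous f) (hneg : NegativeFeedback f) :
    StrictMonoOn (potential f) (Ici 0) := by
  refine strictMonoOn_of_deriv_pos (convex_Ici 0)
    (fun x _ => (hasDerivAt_potential hf x).continuousAt.continuousWithinAt) fun x hx => ?_
  rw [interior_Ici] at hx
  rw [(hasDerivAt_potential hf x).deriv]
  exact neg_pos.2 (hneg.neg_of_pos hx)

lemma potential_lt_potential_iff (hf : Continuous f) (hneg : NegativeFeedback f) (hodd : f.Odd)
    {x y : ℝ} : potential f x < potential f y ↔ |x| < |y| := by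
  rw [← potential_abs hodd x, ← potential_abs hodd y]
  exact (strictMonoOn_potential hf hneg).lt_iff_lt (abs_nonneg x) (abs_nonneg y)

lemma potential_le_potential_iff (hf : Continuous f) (hneg : NegativeFeedback f) (hodd : f.Odd)
    {x y : ℝ} : potential f x ≤ potential f y ↔ |x| ≤ |y| := by
  simpa only [not_lt] using (potential_lt_potential_iff hf hneg hodd (x := y) (y := x)).not

lemma potential_zero : potential f 0 = 0 := intervalIntegral.integral_same

lemma potential_nonneg (hf : Continuous f) (hneg : NegativeFeedback f) (hodd : f.Odd) (x : ℝ) :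
    0 ≤ potential f x := by
  rw [← potential_zero (f := f), potential_le_potential_iff hf hneg hodd, abs_zero]
  exact abs_nonneg x

lemma potential_eq_integral_abs (hneg : NegativeFeedback f) {x : ℝ} (hx : 0 ≤ x) (h0 : f 0 = 0) :
    potential f x = ∫ s in (0 : ℝ)..x, |f s| := by
  refine intervalIntegral.integral_congr fun s hs => ?_
  rw [uIcc_of_le hx] at hs
  rcases hs.1.eq_or_lt with rfl | hpos
  · simp [h0]
  · exact (abs_of_neg (hneg.neg_of_pos hpos)).symm

lemma mul_sub_le_potential_sub {a m γ : ℝ} (hf : Continuous f) (ham : a ≤ m)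
    (hplateau : ∀ x ∈ Ioc a m, f x ≤ -γ) : γ * (m - a) ≤ potential f m - potential f a := by
  refine (convex_Icc a m).mul_sub_le_image_sub_of_le_deriv
    (fun x _ => (hasDerivAt_potential hf x).continuousAt.continuousWithinAt)
    (fun x _ => (hasDerivAt_potential hf x).differentiableAt.differentiableWithinAt)
    (fun x hx => ?_) a (left_mem_Icc.2 ham) m (right_mem_Icc.2 ham) ham
  rw [interior_Icc] at hx
  rw [(hasDerivAt_potential hf x).deriv]
  exact le_neg_of_le_neg (hplateau x (Ioo_subset_Ioc_self hx))

lemma two_mul_potential_lt {a m γ : ℝ} (hf : Continuous f) (hneg : NegativeFeedback f)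
    (h0 : f 0 = 0) (ha : 0 ≤ a) (hγ : 0 < γ) (hplateau : ∀ x ∈ Ioc a m, f x ≤ -γ)
    (hintegral : (1 / γ) * ∫ s in (0 : ℝ)..a, |f s| < m - a) :
    2 * potential f a < potential f m := by
  have hnn : 0 ≤ ∫ s in (0 : ℝ)..a, |f s| :=
    intervalIntegral.integral_nonneg ha fun _ _ => abs_nonneg _
  have ham : a ≤ m := by
    have := mul_nonneg (one_div_pos.2 hγ).le hnn
    linarith
  rw [one_div, inv_mul_lt_iff₀ hγ, ← potential_eq_integral_abs hneg ha h0] at hintegral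
  linarith [mul_sub_le_potential_sub hf ham hplateau]

end Potential

/-! ### Orbits and their angle -/

/-- `z` is the orbit of the planar system that starts at the point `m` of the real axis. Energy
conservation makes `|m|` the amplitude of both of its coordinates. -/
structure IsOrbit (f : ℝ → ℝ) (m : ℝ) (z : ℝ → ℂ) : Prop where
  apply_zero : z 0 = m
  isIntegralCurve : IsIntegralCurve z fun _ => planarField f

/-- The angle swept by the curve `z` during `[0, t]` if it solves the planar system. -/
noncomputable def angle (f : ℝ → ℝ) (z : ℝ → ℂ) (t : ℝ) : ℝ :=
  ∫ s in (0 : ℝ)..t, angularSpeed f (z s)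

section Orbit

variable {f : ℝ → ℝ} {K : ℝ≥0} {m : ℝ} {z : ℝ → ℂ}

lemma angle_zero : angle f z 0 = 0 := intervalIntegral.integral_same

lemma exists_isOrbit (hK : LipschitzWith K f) {L : ℝ} (hL : ∀ x, |f x| ≤ L) (m : ℝ) :
    ∃ z, IsOrbit f m z := by
  have hL0 : 0 ≤ 2 * L := (norm_nonneg _).trans (norm_planarField_le hL 0)
  obtain ⟨z, h0, hz⟩ := exists_isIntegralCurve_of_lipschitzWith_of_bounded
    (lipschitzWith_planarField hK) (L := ⟨2 * L, hL0⟩) (norm_planarField_le hL) m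
  exact ⟨z, h0, hz⟩

namespace IsOrbit

lemma hasDerivAt_re (hz : IsOrbit f m z) (t : ℝ) :
    HasDerivAt (fun t => (z t).re) (f (z t).im) t :=
  Complex.reCLM.hasFDerivAt.comp_hasDerivAt t (hz.isIntegralCurve t)

lemma hasDerivAt_im (hz : IsOrbit f m z) (t : ℝ) :
    HasDerivAt (fun t => (z t).im) (-f (z t).re) t :=
  Complex.imCLM.hasFDerivAt.comp_hasDerivAt t (hz.isIntegralCurve t)

lemma potential_add_potential (hz : IsOrbit f m z) (hf : Continuous f) (t : ℝ) :
    potential f (z t).re + potential f (z t).im = potential f m := by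
  have hderiv : ∀ t, HasDerivAt
      (fun t => potential f (z t).re + potential f (z t).im) 0 t := fun t =>
    (((hasDerivAt_potential hf _).comp t (hz.hasDerivAt_re t)).add
      ((hasDerivAt_potential hf _).comp t (hz.hasDerivAt_im t))).congr_deriv (by ring)
  have h := is_const_of_deriv_eq_zero (fun t => (hderiv t).differentiableAt)
    (fun t => (hderiv t).deriv) t 0
  simpa [hz.apply_zero, potential_zero] using h

lemma abs_re_le (hz : IsOrbit f m z) (hf : Continuous f) (hneg : NegativeFeedback f)
    (hodd : f.Odd) (t : ℝ) : |(z t).re| ≤ |m| := by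
  rw [← potential_le_potential_iff hf hneg hodd, ← hz.potential_add_potential hf t]
  exact le_add_of_nonneg_right (potential_nonneg hf hneg hodd _)

lemma abs_im_le (hz : IsOrbit f m z) (hf : Continuous f) (hneg : NegativeFeedback f)
    (hodd : f.Odd) (t : ℝ) : |(z t).im| ≤ |m| := by
  rw [← potential_le_potential_iff hf hneg hodd, ← hz.potential_add_potential hf t]
  exact le_add_of_nonneg_left (potential_nonneg hf hneg hodd _)

lemma ne_zero (hz : IsOrbit f m z) (hK : LipschitzWith K f) (h0 : f 0 = 0) (hm : m ≠ 0) (t : ℝ) :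
    z t ≠ 0 := fun ht => by
  have hrest : IsIntegralCurve (fun _ => (0 : ℂ)) fun _ => planarField f := fun s => by
    simpa only [planarField_zero h0] using hasDerivAt_const s (0 : ℂ)
  have h := eq_of_isIntegralCurve_of_lipschitzWith (lipschitzWith_planarField hK)
    hz.isIntegralCurve hrest t ht
  exact hm (by exact_mod_cast hz.apply_zero.symm.trans (congrFun h 0))

lemma continuous_angularSpeed (hz : IsOrbit f m z) (hf : Continuous f) (hne : ∀ t, z t ≠ 0) :
    Continuous fun t => angularSpeed f (z t) :=
  continuous_iff_continuousAt.2 fun t =>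
    (continuousAt_angularSpeed hf (hne t)).comp (hz.isIntegralCurve t).continuousAt

lemma strictMono_angle (hz : IsOrbit f m z) (hf : Continuous f) (hneg : NegativeFeedback f)
    (hne : ∀ t, z t ≠ 0) : StrictMono (angle f z) := by
  refine strictMono_of_deriv_pos fun t => ?_
  change 0 < deriv (fun t => ∫ s in (0 : ℝ)..t, angularSpeed f (z s)) t
  rw [((hz.continuous_angularSpeed hf hne).integral_hasStrictDerivAt 0 t).hasDerivAt.deriv]
  exact angularSpeed_pos hneg (hne t)

lemma eq_norm_mul_exp_angle (hz : IsOrbit f m z) (hf : Continuous f) (hm : 0 < m)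
    (hne : ∀ t, z t ≠ 0) (t : ℝ) :
    z t = ‖z t‖ * Complex.exp (angle f z t * Complex.I) :=
  eq_norm_mul_exp_integral_im_div hz.isIntegralCurve
    ((continuous_planarField hf).comp hz.isIntegralCurve.continuous) hne
    (by rw [hz.apply_zero, Complex.norm_of_nonneg hm.le]) t

lemma re_eq_norm_mul_cos_angle (hz : IsOrbit f m z) (hf : Continuous f) (hm : 0 < m)
    (hne : ∀ t, z t ≠ 0) (t : ℝ) : (z t).re = ‖z t‖ * Real.cos (angle f z t) := by
  conv_lhs => rw [hz.eq_norm_mul_exp_angle hf hm hne t]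
  rw [Complex.re_ofReal_mul, Complex.exp_ofReal_mul_I_re]

lemma im_eq_norm_mul_sin_angle (hz : IsOrbit f m z) (hf : Continuous f) (hm : 0 < m)
    (hne : ∀ t, z t ≠ 0) (t : ℝ) : (z t).im = ‖z t‖ * Real.sin (angle f z t) := by
  conv_lhs => rw [hz.eq_norm_mul_exp_angle hf hm hne t]
  rw [Complex.im_ofReal_mul, Complex.exp_ofReal_mul_I_im]

lemma re_pos_of_angle_mem_Ioo (hz : IsOrbit f m z) (hf : Continuous f) (hm : 0 < m)
    (hne : ∀ t, z t ≠ 0) {t : ℝ} (ht : angle f z t ∈ Ioo (-(π / 2)) (π / 2)) : 0 < (z t).re := by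
  rw [hz.re_eq_norm_mul_cos_angle hf hm hne]
  exact mul_pos (norm_pos_iff.2 (hne t)) (Real.cos_pos_of_mem_Ioo ht)

lemma im_pos_of_angle_mem_Ioo (hz : IsOrbit f m z) (hf : Continuous f) (hm : 0 < m)
    (hne : ∀ t, z t ≠ 0) {t : ℝ} (ht : angle f z t ∈ Ioo 0 π) : 0 < (z t).im := by
  rw [hz.im_eq_norm_mul_sin_angle hf hm hne]
  exact mul_pos (norm_pos_iff.2 (hne t)) (Real.sin_pos_of_mem_Ioo ht)

lemma im_eq_re_of_angle_eq (hz : IsOrbit f m z) (hf : Continuous f) (hm : 0 < m)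
    (hne : ∀ t, z t ≠ 0) {t : ℝ} (ht : angle f z t = π / 4) : (z t).im = (z t).re := by
  rw [hz.im_eq_norm_mul_sin_angle hf hm hne, hz.re_eq_norm_mul_cos_angle hf hm hne, ht,
    Real.sin_pi_div_four, Real.cos_pi_div_four]

lemma im_mem_Icc_of_angle_mem_Icc (hz : IsOrbit f m z) (hf : Continuous f) (hm : 0 < m)
    (hne : ∀ t, z t ≠ 0) {t : ℝ} (ht : angle f z t ∈ Icc 0 (π / 4)) :
    (z t).im ∈ Icc 0 (z t).re := by
  have hsin : 0 ≤ Real.sin (angle f z t) :=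
    Real.sin_nonneg_of_nonneg_of_le_pi ht.1 (by linarith [ht.2, Real.pi_pos])
  have hcos : Real.sin (angle f z t) ≤ Real.cos (angle f z t) := by
    rw [← Real.sin_pi_div_two_sub]
    exact Real.sin_le_sin_of_le_of_le_pi_div_two (by linarith [ht.1, Real.pi_pos])
      (by linarith [ht.1]) (by linarith [ht.2])
  rw [hz.im_eq_norm_mul_sin_angle hf hm hne, hz.re_eq_norm_mul_cos_angle hf hm hne]
  exact ⟨mul_nonneg (norm_nonneg _) hsin, mul_le_mul_of_nonneg_left hcos (norm_nonneg _)⟩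

/-! ### Symmetries of orbits that are on the diagonal at time `1 / 2` -/

lemma eq_I_mul_conj_of_diagonal (hz : IsOrbit f m z) (hK : LipschitzWith K f)
    (hdiag : (z (1 / 2)).im = (z (1 / 2)).re) (t : ℝ) : z t = Complex.I * conj (z (1 - t)) := by
  have hreflected : IsIntegralCurve (fun t => Complex.I * conj (z (1 - t)))
      fun _ => planarField f := fun t => by
    refine (((hz.isIntegralCurve (1 - t)).comp_const_sub 1 t).star.const_mul
      Complex.I).congr_deriv ?_
    beta_reduce
    rw [planarField_I_mul_conj]
    simp
  refine congrFun (eq_of_isIntegralCurve_of_lipschitzWith (lipschitzWith_planarField hK)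
    hz.isIntegralCurve hreflected (1 / 2) ?_) t
  rw [sub_half]
  generalize z (1 / 2) = w at hdiag ⊢
  apply Complex.ext <;> simp [hdiag]

lemma apply_add_one (hz : IsOrbit f m z) (hK : LipschitzWith K f) (hodd : f.Odd)
    (hdiag : (z (1 / 2)).im = (z (1 / 2)).re) (t : ℝ) : z (t + 1) = Complex.I * z t := by
  have hrotated : IsIntegralCurve (fun t => Complex.I * z t) fun _ => planarField f := fun t =>
    ((hz.isIntegralCurve t).const_mul Complex.I).congr_deriv (planarField_I_mul hodd _).symm
  refine congrFun (eq_of_isIntegralCurve_of_lipschitzWith (lipschitzWith_planarField hK)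
    (hz.isIntegralCurve.comp_add 1) hrotated 0 ?_) t
  rw [Function.comp_apply, hz.eq_I_mul_conj_of_diagonal hK hdiag, hz.apply_zero]
  simp [hz.apply_zero]

lemma re_neg (hz : IsOrbit f m z) (hK : LipschitzWith K f) (hodd : f.Odd)
    (hdiag : (z (1 / 2)).im = (z (1 / 2)).re) (t : ℝ) : (z (-t)).re = (z t).re := by
  rw [hz.eq_I_mul_conj_of_diagonal hK hdiag t, sub_eq_neg_add,
    hz.apply_add_one hK hodd hdiag]
  simp

lemma re_sub_one (hz : IsOrbit f m z) (hK : LipschitzWith K f) (hodd : f.Odd)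
    (hdiag : (z (1 / 2)).im = (z (1 / 2)).re) (t : ℝ) : (z (t - 1)).re = (z t).im := by
  have h := hz.apply_add_one hK hodd hdiag (t - 1)
  rw [sub_add_cancel] at h
  simp [h]

lemma re_sub_two (hz : IsOrbit f m z) (hK : LipschitzWith K f) (hodd : f.Odd)
    (hdiag : (z (1 / 2)).im = (z (1 / 2)).re) (t : ℝ) : (z (t - 2)).re = -(z t).re := by
  have h := hz.apply_add_one hK hodd hdiag (t - 1)
  rw [sub_add_cancel] at h
  rw [h, show t - 2 = t - 1 - 1 by ring, hz.re_sub_one hK hodd hdiag]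
  simp

lemma re_pos (hz : IsOrbit f m z) (hK : LipschitzWith K f) (hneg : NegativeFeedback f)
    (hodd : f.Odd) (hm : 0 < m) (hangle : angle f z (1 / 2) = π / 4) {t : ℝ}
    (ht : t ∈ Ioo (-1) 1) : 0 < (z t).re := by
  have hf := hK.continuous
  have hne := hz.ne_zero hK hodd.map_zero hm.ne'
  have hdiag := hz.im_eq_re_of_angle_eq hf hm hne hangle
  have hmono := hz.strictMono_angle hf hneg hne
  have heven : (z t).re = (z |t|).re := by
    rcases abs_choice t with h | h <;> simp only [h, hz.re_neg hK hodd hdiag]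
  have ht1 : |t| < 1 := abs_lt.2 ht
  rw [heven]
  rcases le_total |t| (1 / 2) with hle | hle
  · have hlow : 0 ≤ angle f z |t| := angle_zero.symm.trans_le (hmono.monotone (abs_nonneg t))
    have hup : angle f z |t| ≤ π / 4 := (hmono.monotone hle).trans_eq hangle
    exact hz.re_pos_of_angle_mem_Ioo hf hm hne
      ⟨by linarith [Real.pi_pos], by linarith [Real.pi_pos]⟩
  · have hlow : 0 < angle f z (1 - |t|) := angle_zero.symm.trans_lt (hmono (sub_pos.2 ht1))
    have hup : angle f z (1 - |t|) ≤ π / 4 :=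
      (hmono.monotone (by linarith)).trans_eq hangle
    have him := hz.im_pos_of_angle_mem_Ioo hf hm hne ⟨hlow, by linarith [Real.pi_pos]⟩
    rw [hz.eq_I_mul_conj_of_diagonal hK hdiag]
    simpa using him

end IsOrbit

end Orbit

/-! ### Kaplan–Yorke solutions -/

section KaplanYorke

variable {f x : ℝ → ℝ}

lemma periodic_abs_of_antiperiodic (hanti : Function.Antiperiodic x 2) :
    Function.Periodic (fun t => |x t|) 2 := fun t => by
  simp only [hanti t, abs_neg]

lemma exists_int_eq_of_antiperiodic (hanti : Function.Antiperiodic x 2)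
    (hpos : ∀ t ∈ Ioo (-1 : ℝ) 1, 0 < x t) {t : ℝ} (ht : x t = 0) : ∃ n : ℤ, t = 2 * n + 1 := by
  obtain ⟨n, ⟨hlow, hup⟩, -⟩ := existsUnique_sub_zsmul_mem_Ico (two_pos (α := ℝ)) t (-1)
  rw [zsmul_eq_mul] at hlow hup
  have hzero : x (t - n * 2) = 0 := by
    have h := (periodic_abs_of_antiperiodic hanti).sub_int_mul_eq n (x := t)
    simpa only [ht, abs_zero, abs_eq_zero] using h
  rcases hlow.eq_or_lt with heq | hlt
  · exact ⟨n - 1, by push_cast; linarith⟩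
  · exact absurd hzero (hpos _ ⟨hlt, by linarith⟩).ne'

lemma one_lt_abs_sub_of_antiperiodic (hanti : Function.Antiperiodic x 2)
    (hpos : ∀ t ∈ Ioo (-1 : ℝ) 1, 0 < x t) {s t : ℝ} (hs : x s = 0) (ht : x t = 0)
    (hst : s ≠ t) : 1 < |s - t| := by
  obtain ⟨n, rfl⟩ := exists_int_eq_of_antiperiodic hanti hpos hs
  obtain ⟨k, rfl⟩ := exists_int_eq_of_antiperiodic hanti hpos ht
  have hnk : n - k ≠ 0 := fun h => hst (by rw [sub_eq_zero.1 h])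
  have hone : (1 : ℝ) ≤ |(n : ℝ) - k| := by exact_mod_cast Int.one_le_abs hnk
  rw [show (2 * (n : ℝ) + 1) - (2 * k + 1) = 2 * (n - k) by ring, abs_mul, abs_two]
  linarith

lemma minPeriod_four_of_antiperiodic (hanti : Function.Antiperiodic x 2)
    (hpos : ∀ t ∈ Ioo (-1 : ℝ) 1, 0 < x t) (h1 : x 1 = 0) : MinPeriod x 4 := by
  have hper : Function.Periodic x 4 := (by norm_num : (2 : ℝ) * 2 = 4) ▸ hanti.periodic_two_mul
  refine ⟨by norm_num, hper, fun T hT hTper => ?_⟩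
  by_contra! hlt
  obtain ⟨n, hn⟩ := exists_int_eq_of_antiperiodic hanti hpos ((hTper 1).trans h1)
  have hn0 : 0 < n := by exact_mod_cast (by linarith : (0 : ℝ) < n)
  have hn2 : n < 2 := by exact_mod_cast (by linarith : (n : ℝ) < 2)
  obtain rfl : n = 1 := by lia
  have hT2 : T = 2 := by push_cast at hn; linarith
  have h0 := hpos 0 (by norm_num)
  linarith [hTper 0, hT2 ▸ hanti 0]

lemma isKY_of_antiperiodic (hx : ∀ t, HasDerivAt x (f (x (t - 1))) t)
    (hanti : Function.Antiperiodic x 2) (hpos : ∀ t ∈ Ioo (-1 : ℝ) 1, 0 < x t) (h1 : x 1 = 0) :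
    IsKY f x := by
  have hmin := minPeriod_four_of_antiperiodic hanti hpos h1
  have h0 := hpos 0 (by norm_num)
  refine ⟨⟨hx, ⟨4, hmin.1, hmin.2.1⟩, ⟨0, 1, (h1.trans_lt h0).ne'⟩, fun s t => ?_⟩, hmin,
    fun t => ?_⟩
  · exact one_lt_abs_sub_of_antiperiodic hanti hpos
  · rw [hanti.sub_eq, neg_neg]

lemma IsOrbit.isKY {K : ℝ≥0} {m : ℝ} {z : ℝ → ℂ} (hz : IsOrbit f m z) (hK : LipschitzWith K f)
    (hneg : NegativeFeedback f) (hodd : f.Odd) (hm : 0 < m)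
    (hangle : angle f z (1 / 2) = π / 4) : IsKY f fun t => (z t).re := by
  have hdiag := hz.im_eq_re_of_angle_eq hK.continuous hm (hz.ne_zero hK hodd.map_zero hm.ne')
    hangle
  refine isKY_of_antiperiodic (fun t => ?_) (fun t => ?_)
    (fun t => hz.re_pos hK hneg hodd hm hangle) ?_
  · rw [hz.re_sub_one hK hodd hdiag]
    exact hz.hasDerivAt_re t
  · rw [← neg_eq_iff_eq_neg, ← hz.re_sub_two hK hodd hdiag, add_sub_cancel_right]
  · rw [hz.eq_I_mul_conj_of_diagonal hK hdiag, sub_self, hz.apply_zero]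
    simp

end KaplanYorke

/-! ### Varying the amplitude -/

section Amplitude

variable {f : ℝ → ℝ} {K : ℝ≥0} {m : ℝ} {z : ℝ → ℂ}

lemma continuousOn_angle (hK : LipschitzWith K f) (h0 : f 0 = 0) {o : ℝ → ℝ → ℂ}
    (ho : ∀ m, IsOrbit f m (o m)) {t : ℝ} (ht : 0 ≤ t) :
    ContinuousOn (fun m => angle f (o m) t) (Ioi 0) := fun m hm => by
  have hne : ∀ {m}, 0 < m → ∀ s, o m s ≠ 0 := fun hm => (ho _).ne_zero hK h0 hm.ne'
  have hcont : ∀ s, 0 ≤ s → Continuous fun m => o m s := fun s hs =>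
    continuous_apply_of_isIntegralCurve (lipschitzWith_planarField hK)
      (fun m => (ho m).isIntegralCurve)
      (Complex.continuous_ofReal.congr fun m => (ho m).apply_zero.symm) hs
  refine intervalIntegral.continuousWithinAt_of_dominated_interval (bound := fun _ => (K : ℝ))
    ?_ ?_ intervalIntegrable_const ?_
  · filter_upwards [self_mem_nhdsWithin] with m hm
    exact ((ho m).continuous_angularSpeed hK.continuous (hne hm)).aestronglyMeasurable
  · exact Eventually.of_forall fun m => Eventually.of_forall fun s _ =>
      abs_angularSpeed_le_of_lipschitzWith hK h0 _
  · refine Eventually.of_forall fun s hs => ContinuousAt.continuousWithinAt ?_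
    rw [uIoc_of_le ht] at hs
    exact ContinuousAt.comp (f := fun m => o m s)
      (continuousAt_angularSpeed hK.continuous (hne hm s)) (hcont s hs.1.le).continuousAt

namespace IsOrbit

lemma angle_le_mul (hz : IsOrbit f m z) (hf : Continuous f) (hne : ∀ t, z t ≠ 0) {k t : ℝ}
    (ht : 0 ≤ t) (hk : ∀ s ∈ Icc 0 t, angularSpeed f (z s) ≤ k) : angle f z t ≤ t * k := by
  have h := intervalIntegral.integral_mono_on (μ := MeasureTheory.volume) ht
    ((hz.continuous_angularSpeed hf hne).intervalIntegrable 0 t) intervalIntegrable_const hk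
  rwa [intervalIntegral.integral_const, sub_zero, smul_eq_mul] at h

lemma lt_re_of_im_mem_Icc (hz : IsOrbit f m z) (hf : Continuous f) (hneg : NegativeFeedback f)
    (hodd : f.Odd) {a t : ℝ} (henergy : 2 * potential f a < potential f m)
    (him : (z t).im ∈ Icc 0 (z t).re) : a < (z t).re := by
  have hre : 0 ≤ (z t).re := him.1.trans him.2
  have hle : potential f (z t).im ≤ potential f (z t).re :=
    (strictMonoOn_potential hf hneg).monotoneOn him.1 hre him.2
  have hlt : potential f a < potential f (z t).re := by
    linarith [hz.potential_add_potential hf t]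
  rw [potential_lt_potential_iff hf hneg hodd, abs_of_nonneg hre] at hlt
  exact (le_abs_self a).trans_lt hlt

lemma pi_div_four_lt_angle (hz : IsOrbit f m z) (hK : LipschitzWith K f)
    (hneg : NegativeFeedback f) (hodd : f.Odd) (hm : 0 < m) {a γ : ℝ} (hγ : 2 * m < γ)
    (hplateau : ∀ x ∈ Ioc a m, f x ≤ -γ) (henergy : 2 * potential f a < potential f m) :
    π / 4 < angle f z (1 / 2) := by
  have hf := hK.continuous
  have hne := hz.ne_zero hK hodd.map_zero hm.ne'
  by_contra! hle
  have hre_le : ∀ t, (z t).re ≤ m := fun t =>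
    (le_abs_self _).trans ((hz.abs_re_le hf hneg hodd t).trans_eq (abs_of_pos hm))
  have hmono := (hz.strictMono_angle hf hneg hne).monotone
  have hsector : ∀ t ∈ Icc (0 : ℝ) (1 / 2), (z t).im ∈ Icc 0 (z t).re := fun t ht =>
    hz.im_mem_Icc_of_angle_mem_Icc hf hm hne
      ⟨angle_zero.symm.trans_le (hmono ht.1), (hmono ht.2).trans hle⟩
  have hspeed : ∀ t ∈ Icc (0 : ℝ) (1 / 2), γ ≤ -f (z t).re := fun t ht =>
    le_neg_of_le_neg (hplateau _
      ⟨hz.lt_re_of_im_mem_Icc hf hneg hodd henergy (hsector t ht), hre_le t⟩)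
  have hrise : γ * (1 / 2 - 0) ≤ (z (1 / 2)).im - (z 0).im := by
    refine (convex_Icc (0 : ℝ) (1 / 2)).mul_sub_le_image_sub_of_le_deriv
      (fun t _ => (hz.hasDerivAt_im t).continuousAt.continuousWithinAt)
      (fun t _ => (hz.hasDerivAt_im t).differentiableAt.differentiableWithinAt)
      (fun t ht => ?_) 0 (by norm_num) (1 / 2) (by norm_num) (by norm_num)
    rw [(hz.hasDerivAt_im t).deriv]
    exact hspeed t (interior_subset ht)
  have hstart : (z 0).im = 0 := by simp [hz.apply_zero]
  linarith [(hsector (1 / 2) (by norm_num)).2, hre_le (1 / 2)]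

lemma angularSpeed_le_one_of_bounded (hz : IsOrbit f m z) {L : ℝ} (hL : ∀ x, |f x| ≤ L)
    (hm : 3 * L ≤ m) (hm0 : 0 < m) {t : ℝ} (ht : t ∈ Icc (0 : ℝ) (1 / 2)) :
    angularSpeed f (z t) ≤ 1 := by
  have hL0 : 0 ≤ L := (abs_nonneg _).trans (hL 0)
  have hdist : ‖z t - z 0‖ ≤ 2 * L * (t - 0) :=
    norm_image_sub_le_of_norm_deriv_le_segment' (fun s _ => (hz.isIntegralCurve s).hasDerivWithinAt)
      (fun s _ => norm_planarField_le hL _) t ⟨ht.1, le_rfl⟩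
  have hstart : ‖z 0‖ = m := by rw [hz.apply_zero, Complex.norm_of_nonneg hm0.le]
  have hnorm : 2 * L ≤ ‖z t‖ := by
    have := norm_sub_norm_le (z 0) (z t)
    rw [norm_sub_rev] at this
    nlinarith [ht.2]
  refine (le_abs_self _).trans ((abs_angularSpeed_le_norm_div_norm _).trans ?_)
  exact div_le_one_of_le₀ ((norm_planarField_le hL _).trans hnorm) (norm_nonneg _)

lemma angle_lt_pi_div_four_of_bounded (hz : IsOrbit f m z) (hK : LipschitzWith K f) (h0 : f 0 = 0)
    {L : ℝ} (hL : ∀ x, |f x| ≤ L) (hm : 3 * L ≤ m) (hm0 : 0 < m) :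
    angle f z (1 / 2) < π / 4 := by
  have h := hz.angle_le_mul hK.continuous (hz.ne_zero hK h0 hm0.ne') one_half_pos.le
    fun s hs => hz.angularSpeed_le_one_of_bounded hL hm hm0 hs
  linarith [Real.pi_gt_three]

lemma angle_le_of_abs_le (hz : IsOrbit f m z) (hK : LipschitzWith K f)
    (hneg : NegativeFeedback f) (hodd : f.Odd) (hm : m ≠ 0) {k : ℝ}
    (hk : ∀ x, |x| ≤ |m| → -(x * f x) ≤ k * x ^ 2) {t : ℝ} (ht : 0 ≤ t) :
    angle f z t ≤ t * k := by
  have hf := hK.continuous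
  have hne := hz.ne_zero hK hodd.map_zero hm
  exact hz.angle_le_mul hf hne ht fun s _ => angularSpeed_le (hne s)
    (hk _ (hz.abs_re_le hf hneg hodd s)) (hk _ (hz.abs_im_le hf hneg hodd s))

end IsOrbit

lemma eventually_neg_mul_le_mul_sq {f' k : ℝ} (hf' : HasDerivAt f f' 0) (h0 : f 0 = 0)
    (hk : -f' < k) : ∀ᶠ x in 𝓝 0, -(x * f x) ≤ k * x ^ 2 := by
  have hlittle := hf'.isLittleO.bound (sub_pos.2 hk)
  filter_upwards [hlittle] with x hx
  rw [h0, sub_zero, sub_zero, smul_eq_mul, Real.norm_eq_abs, Real.norm_eq_abs] at hx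
  have hmul : -(x * (f x - x * f')) ≤ (k - -f') * x ^ 2 := calc
    -(x * (f x - x * f')) ≤ |x| * |f x - x * f'| := (neg_le_abs _).trans_eq (abs_mul _ _)
    _ ≤ |x| * ((k - -f') * |x|) := mul_le_mul_of_nonneg_left hx (abs_nonneg x)
    _ = (k - -f') * x ^ 2 := by rw [← sq_abs x]; ring
  linarith

lemma exists_angle_lt_pi_div_four_of_lt_deriv (hK : LipschitzWith K f) (hneg : NegativeFeedback f)
    (hodd : f.Odd) {f' : ℝ} (hf' : HasDerivAt f f' 0) (hlt : -(π / 2) < f') {M : ℝ} (hM : 0 < M) :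
    ∃ m ∈ Ioo 0 M, ∀ z, IsOrbit f m z → angle f z (1 / 2) < π / 4 := by
  obtain ⟨k, hk, hkπ⟩ := exists_between (neg_lt.1 hlt)
  obtain ⟨ε, hε, hball⟩ := Metric.eventually_nhds_iff.1
    (eventually_neg_mul_le_mul_sq hf' hodd.map_zero hk)
  obtain ⟨m, hm0, hm⟩ := exists_between (lt_min hM hε)
  refine ⟨m, ⟨hm0, hm.trans_le (min_le_left _ _)⟩, fun z hz => ?_⟩
  have h := hz.angle_le_of_abs_le hK hneg hodd hm0.ne' (k := k) (fun x hx => hball ?_)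
    one_half_pos.le
  · linarith
  · rw [dist_zero_right, Real.norm_eq_abs]
    exact (hx.trans_eq (abs_of_pos hm0)).trans_lt (hm.trans_le (min_le_right _ _))

end Amplitude

/-! ### Odd functions that are eventually constant -/

section EventuallyConst

variable {f : ℝ → ℝ} {ρ : ℝ}

lemma apply_projIcc_of_odd (hodd : f.Odd) (hρ : 0 < ρ) (hconst : ∀ x, ρ ≤ x → f x = f ρ) (x : ℝ) :
    f (projIcc (-ρ) ρ (neg_le_self hρ.le) x) = f x := by
  rcases le_total x (-ρ) with hx | hx
  · rw [projIcc_of_le_left _ hx, hodd, ← hconst (-x) (le_neg_of_le_neg hx), hodd, neg_neg]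
  rcases le_total ρ x with hx' | hx'
  · rw [projIcc_of_right_le _ hx', hconst x hx']
  · rw [projIcc_of_mem _ ⟨hx, hx'⟩]

lemma exists_lipschitzWith_of_odd (hf : LocallyLipschitz f) (hodd : f.Odd) (hρ : 0 < ρ)
    (hconst : ∀ x, ρ ≤ x → f x = f ρ) : ∃ K, LipschitzWith K f := by
  obtain ⟨K, hK⟩ := hf.locallyLipschitzOn.exists_lipschitzOnWith_of_compact
    (isCompact_Icc (a := -ρ) (b := ρ))
  refine ⟨K, ?_⟩
  simpa [Function.comp_def, apply_projIcc_of_odd hodd hρ hconst] using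
    hK.to_restrict.comp (LipschitzWith.projIcc (neg_le_self hρ.le))

lemma exists_abs_le_of_odd (hf : Continuous f) (hodd : f.Odd) (hρ : 0 < ρ)
    (hconst : ∀ x, ρ ≤ x → f x = f ρ) : ∃ L, ∀ x, |f x| ≤ L := by
  obtain ⟨L, hL⟩ := (isCompact_Icc (a := -ρ) (b := ρ)).exists_bound_of_continuousOn hf.continuousOn
  refine ⟨L, fun x => ?_⟩
  rw [← apply_projIcc_of_odd hodd hρ hconst x]
  exact hL _ (Subtype.coe_prop _)

end EventuallyConst

/-! ### The two solutions -/

theorem statement_17_general {f : ℝ → ℝ} {K : ℝ≥0} {L a m γ : ℝ} (hK : LipschitzWith K f)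
    (hL : ∀ x, |f x| ≤ L) (hneg : NegativeFeedback f) (hodd : f.Odd) (ha : 0 ≤ a) (hm : 0 < m)
    (hγ : 2 * m < γ) (hplateau : ∀ x ∈ Ioc a m, f x ≤ -γ)
    (hintegral : (1 / γ) * ∫ s in (0 : ℝ)..a, |f s| < m - a) :
    (∃ x, IsKY f x ∧ ∃ t, m < x t) ∧
      ∀ f', HasDerivAt f f' 0 → -(π / 2) < f' → ∃ y, IsKY f y ∧ ∀ t, y t < m := by
  have henergy := two_mul_potential_lt hK.continuous hneg hodd.map_zero ha (by linarith) hplateau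
    hintegral
  choose o ho using exists_isOrbit hK hL
  have hcont := continuousOn_angle hK hodd.map_zero ho one_half_pos.le
  have hfast := (ho m).pi_div_four_lt_angle hK hneg hodd hm hγ hplateau henergy
  refine ⟨?_, fun f' hf' hlt => ?_⟩
  · obtain ⟨M, hM, hmM⟩ : ∃ M, 3 * L ≤ M ∧ m < M :=
      ⟨max (3 * L) (m + 1), le_max_left _ _, (lt_add_one m).trans_le (le_max_right _ _)⟩
    have hslow := (ho M).angle_lt_pi_div_four_of_bounded hK hodd.map_zero hL hM (hm.trans hmM)
    obtain ⟨r, hr, hangle⟩ := intermediate_value_Ioo' hmM.le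
      (hcont.mono fun r hr => hm.trans_le hr.1) ⟨hslow, hfast⟩
    refine ⟨_, (ho r).isKY hK hneg hodd (hm.trans hr.1) hangle, 0, ?_⟩
    simpa [(ho r).apply_zero] using hr.1
  · obtain ⟨s, hs, hslow⟩ := exists_angle_lt_pi_div_four_of_lt_deriv hK hneg hodd hf' hlt hm
    obtain ⟨r, hr, hangle⟩ := intermediate_value_Ioo hs.2.le
      (hcont.mono fun r hr => hs.1.trans_le hr.1) ⟨hslow _ (ho s), hfast⟩
    have hr0 := hs.1.trans hr.1
    refine ⟨_, (ho r).isKY hK hneg hodd hr0 hangle, fun t => ?_⟩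
    calc (o r t).re ≤ |r| :=
          (le_abs_self _).trans ((ho r).abs_re_le hK.continuous hneg hodd t)
      _ = r := abs_of_pos hr0
      _ < m := hr.2

theorem statement_17 (f : ℝ → ℝ) (a c δ γ : ℝ)
    (ha : 0 < a) (hc : 0 < c) (hδ : 0 < δ) (hγ : 0 < γ)
    (hi : c < min a δ) (hii : 4 * a ≤ γ ∧ δ < γ) (hiii : δ + (c / δ) * γ ≤ a)
    (hf : ContDiff ℝ 1 f) (hH : HypH f) (hH'' : HypH'' f a c δ γ)
    (hconst : ∃ ρ : ℝ, 0 < ρ ∧ ∀ x : ℝ, ρ ≤ x → f x = f ρ)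
    (hintegral : (1 / γ) * ∫ s in (0 : ℝ)..a, |f s| < a - c) :
    (∃ x : ℝ → ℝ, IsKY f x ∧ ∃ t : ℝ, 2 * a - c < x t) ∧
      (-(Real.pi / 2) < deriv f 0 →
        ∃ y : ℝ → ℝ, IsKY f y ∧ ∀ t : ℝ, y t < 2 * a - c) := by
  obtain ⟨ρ, hρ, hρ_const⟩ := hconst
  obtain ⟨K, hK⟩ := exists_lipschitzWith_of_odd hf.locallyLipschitz hH''.1 hρ hρ_const
  obtain ⟨L, hL⟩ := exists_abs_le_of_odd hf.continuous hH''.1 hρ hρ_const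
  have hca := hi.trans_le (min_le_left a δ)
  exact (statement_17_general hK hL hH.2.1 hH''.1 ha.le (by linarith) (by linarith)
    (fun x hx => (hH''.2.2.1 x (Ioc_subset_Icc_self hx)).le) (by linarith)).imp_right
      fun hsmall => hsmall _ (hf.differentiable one_ne_zero 0).hasDerivAt
end

section
/- Let M ∈ ℕ with M > 1, and let γ₁, …, γ_M be positive reals with γ_{n+1} < γ_n/4 for 1 ≤ n < M. For each n set a_n = γ_n/4, δ_n = γ_n/8, c_n = γ_n/64. Suppose f satisfies (H) and, for every n with 1 ≤ n ≤ M-1, satisfies (H'') with constants a_n, c_n, δ_n, γ_n. Then for each n with 1 ≤ n ≤ M-1, the equation x'(t) = f(x(t-1)) has an SOP solution p_n with 2a_n < max_{t∈ℝ} p_n(t) < γ_n; in particular the solutions p₁, …, p_{M-1} are pairwise distinct (no one is a time translate of another). -/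
open Set Filter

/-!
For a single quadruple of constants, start from the history `t ↦ γ (z - 1 - t)` on `[-1, 0]`, with
`0 < z ≤ 2a/γ`. By oddness of `f` the solution is symmetric about its minimum at time `z`, which
keeps it in `(-γ, -2a]` during the unit of time before `z + 2a/γ`. There `f` equals `δ`, so the
solution climbs with slope `δ` until one unit of time after its return to `-2a` at a time `T`.
From then on `z` is forgotten: while the delayed value crosses the layer `[-2a, -2a + c]`, which
takes the time `c/δ`, the solution gains a fixed amount `I ≤ (c/δ) γ`, and at `E = T + 1 + c/δ` it
has the value `-2a + δ + I` after a unit of time in `[-2a + c, -a]`, where `f` equals `γ`. Hence it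
climbs with slope `γ` on `[E, E + 1]`, and if `γ z = 2a - δ - I` this piece is the negative of the
history. The solution is thus antiperiodic with antiperiod `E + 1 > 1`, and it has a single zero
in each antiperiod.

If two admissible quadruples have `γ < γ'`, the values `-γ'` of `f` force `γ < a'`, so the ranges
`(2a, γ)` and `(2a', γ')` of the two maxima are disjoint.
-/

/-! ### Periodic functions on a half-line -/

lemma exists_periodic_eqOn_Ici {α : Type*} {x : ℝ → α} {T b : ℝ} (hT : 0 < T)
    (hx : ∀ t, b ≤ t → x (t + T) = x t) :
    ∃ p : ℝ → α, Function.Periodic p T ∧ EqOn p x (Ici b) := by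
  have hx_mul : ∀ (n : ℕ) (t : ℝ), b ≤ t → x (t + n * T) = x t := by
    intro n t ht
    induction n with
    | zero => simp
    | succ n ih =>
      have hn : 0 ≤ (n : ℝ) * T := by positivity
      have hsplit : t + (n + 1 : ℕ) * T = t + n * T + T := by
        push_cast
        ring
      rw [hsplit, hx _ (by linarith), ih]
  refine ⟨fun t => x (toIcoMod hT b t), fun t => by simp only [toIcoMod_add_right], ?_⟩
  intro t ht
  have hmod := toIcoMod_add_toIcoDiv_mul hT b t
  have hdiv : 0 ≤ toIcoDiv hT b t := by
    by_contra! hlt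
    have hle : (toIcoDiv hT b t : ℝ) ≤ -1 := by exact_mod_cast Int.le_sub_one_of_lt hlt
    nlinarith [toIcoMod_lt_right hT b t, mem_Ici.1 ht]
  obtain ⟨n, hn⟩ := Int.eq_ofNat_of_zero_le hdiv
  rw [hn, Int.cast_natCast] at hmod
  change x (toIcoMod hT b t) = x t
  rw [← hx_mul n _ (left_le_toIcoMod hT b t), hmod]

lemma eq_of_periodic_of_eqOn_Ici {α : Type*} {p q : ℝ → α} {T b : ℝ} (hT : 0 < T)
    (hp : Function.Periodic p T) (hq : Function.Periodic q T) (h : EqOn p q (Ici b)) :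
    p = q := by
  funext t
  obtain ⟨n, hn⟩ := Archimedean.arch (b - t) hT
  rw [nsmul_eq_mul] at hn
  rw [← hp.nat_mul n t, ← hq.nat_mul n t]
  exact h (by rw [mem_Ici]; linarith)

/-! ### The initial value problem -/

lemma delay_induction {P : ℝ → Prop} {b : ℝ} (base : ∀ t ∈ Icc b (b + 1), P t)
    (step : ∀ t, b + 1 < t → (∀ s ∈ Icc b (t - 1), P s) → P t) {t : ℝ} (ht : b ≤ t) : P t := by
  have upTo : ∀ (n : ℕ), ∀ t ∈ Icc b (b + n), P t := by
    intro n
    induction n with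
    | zero => exact fun t ht => base t ⟨ht.1, ht.2.trans (by norm_num)⟩
    | succ n ih =>
      intro t ht
      have ht2 := ht.2
      push_cast at ht2
      rcases le_or_gt t (b + 1) with hle | hgt
      · exact base t ⟨ht.1, hle⟩
      · exact step t hgt fun s hs => ih s ⟨hs.1, by linarith [hs.2]⟩
  obtain ⟨n, hn⟩ := exists_nat_gt (t - b)
  exact upTo n t ⟨ht, by linarith⟩

namespace IsSolOn

variable {f x y : ℝ → ℝ} {s t h T : ℝ}

lemma neg (hodd : ∀ u, f (-u) = -f u) (hx : IsSolOn f x) : IsSolOn f (fun t => -x t) :=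
  ⟨hx.1.neg, fun t ht => (hodd _).symm ▸ (hx.2 t ht).neg⟩

lemma comp_add_const (hx : IsSolOn f x) (hh : 0 ≤ h) : IsSolOn f (fun t => x (t + h)) := by
  refine ⟨hx.1.comp (by fun_prop) fun t ht => ?_, fun t ht => ?_⟩
  · rw [mem_Ici] at ht ⊢
    linarith
  · have := (hx.2 (t + h) (by linarith)).comp_add_const t h
    rwa [add_sub_right_comm] at this

lemma continuousOn_comp_sub_one (hf : Continuous f) (hx : IsSolOn f x) :
    ContinuousOn (fun t => f (x (t - 1))) (Ici 0) := by
  refine hf.comp_continuousOn (hx.1.comp (by fun_prop) fun t ht => ?_)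
  rw [mem_Ici] at ht ⊢
  linarith

lemma intervalIntegrable (hf : Continuous f) (hx : IsSolOn f x) (hs : 0 ≤ s) (hst : s ≤ t) :
    IntervalIntegrable (fun r => f (x (r - 1))) MeasureTheory.volume s t := by
  refine ((hx.continuousOn_comp_sub_one hf).mono ?_).intervalIntegrable
  rw [uIcc_of_le hst]
  exact fun r hr => hs.trans hr.1

lemma integral_eq_sub (hf : Continuous f) (hx : IsSolOn f x) (hs : 0 ≤ s) (hst : s ≤ t) :
    ∫ r in s..t, f (x (r - 1)) = x t - x s :=
  intervalIntegral.integral_eq_sub_of_hasDerivAt_of_le hst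
    (hx.1.mono fun _ hr => (by linarith : (-1 : ℝ) ≤ s).trans hr.1)
    (fun r hr => hx.2 r (hs.trans_lt hr.1)) (hx.intervalIntegrable hf hs hst)

lemma integral_eq_sub_of_eqOn (hf : Continuous f) (hx : IsSolOn f x) (hs : 0 ≤ s) (hst : s ≤ t)
    (hxy : EqOn x y (Icc (s - 1) (t - 1))) : ∫ r in s..t, f (y (r - 1)) = x t - x s := by
  rw [← hx.integral_eq_sub hf hs hst]
  refine intervalIntegral.integral_congr fun r hr => ?_
  rw [uIcc_of_le hst] at hr
  exact congrArg f (hxy ⟨by linarith [hr.1], by linarith [hr.2]⟩).symm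

lemma sub_mem_Icc {l k : ℝ} (hf : Continuous f) (hx : IsSolOn f x) (hs : 0 ≤ s) (hst : s ≤ t)
    (hb : ∀ r ∈ Icc (s - 1) (t - 1), f (x r) ∈ Icc l k) :
    x t - x s ∈ Icc (l * (t - s)) (k * (t - s)) := by
  have hb' : ∀ r ∈ Icc s t, f (x (r - 1)) ∈ Icc l k := fun r hr =>
    hb _ ⟨by linarith [hr.1], by linarith [hr.2]⟩
  have hint := hx.intervalIntegrable hf hs hst
  have hconst : ∀ m : ℝ, ∫ _ in s..t, m = m * (t - s) := fun m => by simp [mul_comm]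
  rw [← hx.integral_eq_sub hf hs hst, ← hconst l, ← hconst k]
  exact ⟨intervalIntegral.integral_mono_on hst (by simp) hint fun r hr => (hb' r hr).1,
    intervalIntegral.integral_mono_on hst hint (by simp) fun r hr => (hb' r hr).2⟩

lemma eq_add_mul {k : ℝ} (hf : Continuous f) (hx : IsSolOn f x) (hs : 0 ≤ s) (hst : s ≤ t)
    (hk : ∀ r ∈ Icc (s - 1) (t - 1), f (x r) = k) : x t = x s + k * (t - s) := by
  have := hx.sub_mem_Icc hf hs hst (l := k) (k := k) fun r hr => by simp [hk r hr]
  linarith [this.1, this.2]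

lemma eqOn_Ici (hf : Continuous f) (hx : IsSolOn f x) (hy : IsSolOn f y)
    (h : EqOn x y (Icc (-1) 0)) : EqOn x y (Ici (-1)) := by
  have hxy0 : x 0 = y 0 := h (by simp)
  refine fun t ht => delay_induction (P := fun t => x t = y t)
    (by rwa [neg_add_cancel]) (fun t ht ih => ?_) ht
  rw [neg_add_cancel] at ht
  have hxt := hx.integral_eq_sub_of_eqOn hf (y := y) le_rfl ht.le
    fun s hs => ih s ⟨by linarith [hs.1], hs.2⟩
  linarith [hy.integral_eq_sub hf le_rfl ht.le]

lemma exists_periodic_extension (hx : IsSolOn f x) (hT : 0 < T)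
    (hper : ∀ t, -1 ≤ t → x (t + T) = x t) :
    ∃ p : ℝ → ℝ, Function.Periodic p T ∧ EqOn p x (Ici (-1)) ∧
      ∀ t, HasDerivAt p (f (p (t - 1))) t := by
  obtain ⟨p, hp, hpx⟩ := exists_periodic_eqOn_Ici hT hper
  refine ⟨p, hp, hpx, fun t => ?_⟩
  obtain ⟨n, hn⟩ := Archimedean.arch (1 - t) hT
  rw [nsmul_eq_mul] at hn
  have hpn : ∀ s, t - 1 ≤ s → p s = x (s + n * T) := fun s hs => by
    rw [← hpx (by rw [mem_Ici]; linarith), hp.nat_mul n s]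
  have hd := (hx.2 (t + n * T) (by linarith)).comp_add_const t (n * T)
  rw [add_sub_right_comm, ← hpn _ le_rfl] at hd
  refine hd.congr_of_eventuallyEq ?_
  filter_upwards [Ioi_mem_nhds (sub_one_lt t)] with s hs using hpn s (le_of_lt hs)

lemma exists_antiperiodic_extension (hf : Continuous f) (hodd : ∀ u, f (-u) = -f u)
    (hx : IsSolOn f x) (hh : 0 < h) (hx0 : ∀ t ∈ Icc (-1) 0, x (t + h) = -x t) :
    ∃ p : ℝ → ℝ, Function.Antiperiodic p h ∧ EqOn p x (Ici (-1)) ∧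
      ∀ t, HasDerivAt p (f (p (t - 1))) t := by
  have hanti : ∀ t, -1 ≤ t → x (t + h) = -x t :=
    (hx.comp_add_const hh.le).eqOn_Ici hf (hx.neg hodd) hx0
  have hper : ∀ t, -1 ≤ t → x (t + 2 * h) = x t := fun t ht => by
    rw [two_mul, ← add_assoc, hanti _ (by linarith), hanti t ht, neg_neg]
  obtain ⟨p, hp, hpx, hd⟩ := hx.exists_periodic_extension (by linarith) hper
  refine ⟨p, congrFun (eq_of_periodic_of_eqOn_Ici (b := -1) (T := 2 * h) (by linarith)
    (fun t => ?_) (fun t => ?_) fun t ht => ?_), hpx, hd⟩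
  · rw [add_right_comm, hp]
  · rw [hp]
  · rw [mem_Ici] at ht
    rw [hpx (by rw [mem_Ici]; linarith), hpx ht, hanti t ht]

end IsSolOn

section MethodOfSteps

variable {f φ : ℝ → ℝ}

/-- The successive approximations of the method of steps for `x'(t) = f (x (t - 1))` with history
`φ`, i.e. the Picard iterates starting from `φ` frozen at time `0`; the `n`-th one is the solution
on `(-∞, n]`. -/
noncomputable def stepApprox (f φ : ℝ → ℝ) : ℕ → ℝ → ℝ
  | 0 => fun t => φ (min t 0)
  | n + 1 => fun t => φ (min t 0) + ∫ s in (0 : ℝ)..max t 0, f (stepApprox f φ n (s - 1))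

lemma continuous_stepApprox (hf : Continuous f) (hφ : Continuous φ) (n : ℕ) :
    Continuous (stepApprox f φ n) := by
  induction n with
  | zero => exact hφ.comp (by fun_prop)
  | succ n ih =>
    have hprim : Continuous fun b : ℝ => ∫ s in (0 : ℝ)..b, f (stepApprox f φ n (s - 1)) :=
      intervalIntegral.continuous_primitive
        (fun a b => (by fun_prop : Continuous _).intervalIntegrable a b) 0
    exact (hφ.comp (by fun_prop)).add (hprim.comp (by fun_prop))

lemma stepApprox_succ_of_le {n : ℕ} {t : ℝ} (ht : t ≤ n) :
    stepApprox f φ (n + 1) t = stepApprox f φ n t := by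
  induction n generalizing t with
  | zero => simp [stepApprox, max_eq_right (by exact_mod_cast ht : t ≤ 0)]
  | succ n ih =>
    refine congrArg (φ (min t 0) + ·) (intervalIntegral.integral_congr fun s hs => ?_)
    rw [uIcc_of_le (le_max_right t 0)] at hs
    have hs' : s ≤ (n : ℝ) + 1 := hs.2.trans (max_le (by exact_mod_cast ht) (by positivity))
    exact congrArg f (ih (by linarith))

lemma stepApprox_eq_of_le {m n : ℕ} (hmn : m ≤ n) {t : ℝ} (ht : t ≤ m) :
    stepApprox f φ n t = stepApprox f φ m t := by
  induction n, hmn using Nat.le_induction with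
  | base => rfl
  | succ n hmn ih => rw [stepApprox_succ_of_le (ht.trans (by exact_mod_cast hmn)), ih]

lemma exists_eq_stepApprox (f φ : ℝ → ℝ) :
    ∃ x : ℝ → ℝ, ∀ (n : ℕ), ∀ t ≤ (n : ℝ), x t = stepApprox f φ n t :=
  ⟨fun t => stepApprox f φ ⌈t⌉₊ t, fun _ t ht =>
    (stepApprox_eq_of_le (Nat.ceil_le.2 ht) (Nat.le_ceil t)).symm⟩

lemma exists_isSolOn_of_continuous (hf : Continuous f) (hφ : Continuous φ) :
    ∃ x, IsSolOn f x ∧ EqOn x φ (Iic 0) := by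
  obtain ⟨x, hx⟩ := exists_eq_stepApprox f φ
  have hcont : Continuous x := by
    refine continuous_iff_continuousAt.2 fun t => ?_
    obtain ⟨n, hn⟩ := exists_nat_gt t
    refine (continuous_stepApprox hf hφ n).continuousAt.congr ?_
    filter_upwards [Iio_mem_nhds hn] with s hs using (hx n s (le_of_lt hs)).symm
  have hφx : EqOn x φ (Iic 0) := fun t ht => by
    simp only [hx 0 t (by simpa using ht), stepApprox, min_eq_left (mem_Iic.1 ht)]
  have hint : ∀ t, 0 < t → x t = φ 0 + ∫ s in (0 : ℝ)..t, f (x (s - 1)) := by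
    intro t ht
    obtain ⟨n, hn⟩ := exists_nat_gt t
    simp only [hx (n + 1) t (by push_cast; linarith), stepApprox, min_eq_right ht.le,
      max_eq_left ht.le]
    refine congrArg (φ 0 + ·) (intervalIntegral.integral_congr fun s hs => ?_)
    rw [uIcc_of_le ht.le] at hs
    exact congrArg f (hx n _ (by linarith [hs.2])).symm
  refine ⟨x, ⟨hcont.continuousOn, fun t ht => ?_⟩, hφx⟩
  have hfx : Continuous fun s => f (x (s - 1)) := by fun_prop
  refine ((hfx.integral_hasStrictDerivAt 0 t).hasDerivAt.const_add (φ 0)).congr_of_eventuallyEq ?_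
  filter_upwards [Ioi_mem_nhds ht] with s hs using hint s hs

lemma exists_isSolOn (hf : Continuous f) (hφ : ContinuousOn φ (Icc (-1) 0)) :
    ∃ x, IsSolOn f x ∧ EqOn x φ (Icc (-1) 0) := by
  have h : (-1 : ℝ) ≤ 0 := by norm_num
  obtain ⟨x, hx, hxφ⟩ := exists_isSolOn_of_continuous hf
    (φ := IccExtend h ((Icc (-1) 0).domRestrict φ)) (hφ.domRestrict.Icc_extend')
  exact ⟨x, hx, fun t ht => (hxφ ht.2).trans (IccExtend_of_mem h _ ht)⟩

end MethodOfSteps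

lemma isSOP_of_antiperiodic {f p : ℝ → ℝ} {h b : ℝ} (hh : 1 < h)
    (hd : ∀ t, HasDerivAt p (f (p (t - 1))) t) (hp : Function.Antiperiodic p h)
    (hne : ∃ t, p t ≠ 0) (hzero : {t ∈ Ico b (b + h) | p t = 0}.Subsingleton) :
    IsSOP f p := by
  have hh0 : 0 < h := by linarith
  refine ⟨hd, ⟨2 * h, by linarith, hp.periodic_two_mul⟩, ?_, fun u v hu hv huv => ?_⟩
  · obtain ⟨t, ht⟩ := hne
    exact ⟨t + h, t, fun heq => ht (self_eq_neg.1 (heq.symm.trans (hp t)))⟩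
  · have habs : Function.Periodic (fun t => |p t|) h := fun t => by simp only [hp t, abs_neg]
    have hmod : ∀ w, p w = 0 → toIcoMod hh0 b w ∈ {t ∈ Ico b (b + h) | p t = 0} := by
      refine fun w hw => ⟨toIcoMod_mem_Ico hh0 b w, abs_eq_zero.1 ?_⟩
      rw [toIcoMod, habs.sub_zsmul_eq, hw, abs_zero]
    obtain ⟨k, hk⟩ := (toIcoMod_eq_toIcoMod hh0).1 (hzero (hmod v hv) (hmod u hu))
    have hk0 : k ≠ 0 := by
      rintro rfl
      exact huv (sub_eq_zero.1 (by simpa using hk))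
    have hk1 : (1 : ℝ) ≤ |(k : ℝ)| := by exact_mod_cast Int.one_le_abs hk0
    rw [hk, zsmul_eq_mul, abs_mul, abs_of_pos hh0]
    nlinarith

/-! ### The phases of a half wave -/

namespace IsSolOn

section LinearHistory

variable {f x : ℝ → ℝ} {γ z τ : ℝ}

lemma apply_two_mul_of_linear_history (hf : Continuous f) (hodd : ∀ u, f (-u) = -f u)
    (hx : IsSolOn f x) (hlin : EqOn x (fun t => γ * (z - 1 - t)) (Icc (-1) 0)) (hz : 0 ≤ z)
    (hz1 : 2 * z ≤ 1) : x (2 * z) = x 0 := by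
  have hint := hx.integral_eq_sub_of_eqOn hf le_rfl (by linarith : 0 ≤ 2 * z)
    (hlin.mono (Icc_subset_Icc (by norm_num) (by linarith)))
  have hrefl := intervalIntegral.integral_comp_sub_left (a := 0) (b := 2 * z)
    (fun r => f (γ * (z - 1 - (r - 1)))) (2 * z)
  have hcongr : ∀ r, f (γ * (z - 1 - (2 * z - r - 1))) = -f (γ * (z - 1 - (r - 1))) :=
    fun r => by rw [← hodd]; ring_nf
  simp only [hcongr, intervalIntegral.integral_neg, sub_self, sub_zero] at hrefl
  linarith

lemma neg_lt_of_linear_history (hf : Continuous f) (hodd : ∀ u, f (-u) = -f u)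
    (hfeed : ∀ u ∈ Icc 0 γ, -γ ≤ f u) (hx : IsSolOn f x)
    (hlin : EqOn x (fun t => γ * (z - 1 - t)) (Icc (-1) 0)) (hγ : 0 < γ) (hz : 0 < z)
    (hz1 : z ≤ 1) : -γ < x z := by
  have hint := hx.integral_eq_sub_of_eqOn hf le_rfl hz.le
    (hlin.mono (Icc_subset_Icc (by norm_num) (by linarith)))
  have hx0 : x 0 = γ * (z - 1 - 0) := hlin (by simp)
  -- The bound `-γ ≤ f` is strict at the end point, where the argument of `f` is `0`.
  have hlt : ∫ _ in (0 : ℝ)..z, -γ < ∫ r in (0 : ℝ)..z, f (γ * (z - 1 - (r - 1))) := by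
    refine intervalIntegral.integral_lt_integral_of_continuousOn_of_le_of_exists_lt hz
      continuousOn_const (by fun_prop) (fun r hr => hfeed _ ⟨?_, ?_⟩) ⟨z, by simp [hz.le], ?_⟩
    · nlinarith [hr.2]
    · nlinarith [hr.1]
    · have hf0 : f 0 = 0 := self_eq_neg.1 (by simpa using hodd 0)
      simpa [hf0] using hγ
  simp only [intervalIntegral.integral_const, smul_eq_mul] at hlt
  linarith

lemma antitoneOn_of_linear_history (hf : Continuous f) (hfeed : ∀ u ∈ Icc 0 γ, f u ∈ Icc (-γ) 0)
    (hx : IsSolOn f x) (hlin : EqOn x (fun t => γ * (z - 1 - t)) (Icc (-1) 0)) (hγ : 0 ≤ γ)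
    (hz1 : z ≤ 1) : AntitoneOn x (Icc 0 z) := by
  intro s hs t ht hst
  have := hx.sub_mem_Icc hf hs.1 hst (l := -γ) (k := 0) fun r hr => by
    rw [hlin ⟨by linarith [hs.1, hr.1], by linarith [ht.2, hr.2]⟩]
    exact hfeed _ ⟨by nlinarith [ht.2, hr.2], by nlinarith [hs.1, hr.1]⟩
  linarith [this.2]

lemma sub_mem_Icc_of_linear_history (hf : Continuous f)
    (hfeed' : ∀ u ∈ Icc (-γ) 0, f u ∈ Icc 0 γ)
    (hx : IsSolOn f x) (hlin : EqOn x (fun t => γ * (z - 1 - t)) (Icc (-1) 0)) (hγ : 0 ≤ γ)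
    (hz : 0 ≤ z) {s t : ℝ} (hs : z ≤ s) (hst : s ≤ t) (ht : t ≤ 1) :
    x t - x s ∈ Icc 0 (γ * (t - s)) := by
  rw [← zero_mul (t - s)]
  refine hx.sub_mem_Icc hf (hz.trans hs) hst fun r hr => ?_
  rw [hlin ⟨by linarith [hr.1], by linarith [hr.2]⟩]
  exact hfeed' _ ⟨by nlinarith [hr.2], by nlinarith [hr.1]⟩

lemma mem_Ioc_of_linear_history (hf : Continuous f) (hodd : ∀ u, f (-u) = -f u)
    (hfeed : ∀ u ∈ Icc 0 γ, f u ∈ Icc (-γ) 0) (hfeed' : ∀ u ∈ Icc (-γ) 0, f u ∈ Icc 0 γ)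
    (hx : IsSolOn f x) (hlin : EqOn x (fun t => γ * (z - 1 - t)) (Icc (-1) 0)) (hγ : 0 < γ)
    (hz : 0 < z) (hzτ : z ≤ τ) (hτ : 2 * τ ≤ 1) {t : ℝ} (ht : t ∈ Icc (z + τ - 1) (z + τ)) :
    x t ∈ Ioc (-γ) (-(γ * τ)) := by
  have hx0 : x 0 = γ * (z - 1 - 0) := hlin (by simp)
  have hmin : -γ < x z :=
    hx.neg_lt_of_linear_history hf hodd (fun u hu => (hfeed u hu).1) hlin hγ hz (by linarith)
  have hrise := fun s t =>
    hx.sub_mem_Icc_of_linear_history (s := s) (t := t) hf hfeed' hlin hγ.le hz.le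
  have hend : x (z + τ) ≤ -(γ * τ) := by
    have hsym := hx.apply_two_mul_of_linear_history hf hodd hlin hz.le (by linarith)
    have := (hrise (2 * z) (z + τ) (by linarith) (by linarith) (by linarith)).2
    nlinarith
  rcases le_or_gt t 0 with ht0 | ht0
  · have hxt : x t = γ * (z - 1 - t) := hlin ⟨by linarith [ht.1], ht0⟩
    exact ⟨by nlinarith, by nlinarith [ht.1]⟩
  rcases le_or_gt t z with htz | htz
  · have hanti := hx.antitoneOn_of_linear_history hf hfeed hlin hγ.le (by linarith)
    have hzt := hanti ⟨ht0.le, htz⟩ ⟨hz.le, le_rfl⟩ htz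
    have ht0' := hanti ⟨le_rfl, hz.le⟩ ⟨ht0.le, htz⟩ ht0.le
    exact ⟨by linarith, by nlinarith⟩
  · have hzt := (hrise z t le_rfl htz.le (by linarith [ht.2])).1
    have htσ := (hrise t (z + τ) htz.le ht.2 (by linarith)).1
    exact ⟨by linarith, by linarith⟩

end LinearHistory

section Climb

variable {f x : ℝ → ℝ} {b δ γ σ : ℝ}

lemma exists_eq_add_mul_of_plateau (hf : Continuous f) (hx : IsSolOn f x) (hδ : 0 < δ)
    (hσ : 0 ≤ σ) (hplateau : ∀ u ∈ Icc (-γ) (-b), f u = δ)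
    (hlow : ∀ t ∈ Icc (σ - 1) σ, x t ∈ Icc (-γ) (-b)) :
    ∃ T, σ ≤ T ∧ ∀ t ∈ Icc σ (T + 1), x t = -b + δ * (t - T) := by
  have hxσ := hlow σ ⟨by linarith, le_rfl⟩
  obtain ⟨T, hT⟩ : ∃ T, T = σ + (-b - x σ) / δ := ⟨_, rfl⟩
  have hTδ : δ * (T - σ) = -b - x σ := by rw [hT]; field_simp; ring
  have hσT : σ ≤ T := by
    rw [hT]
    exact le_add_of_nonneg_right (div_nonneg (by linarith [hxσ.2]) hδ.le)
  have hlow' : ∀ t, σ - 1 ≤ t → t ≤ T → x t ∈ Icc (-γ) (-b) := by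
    intro t ht
    refine delay_induction (P := fun t => t ≤ T → x t ∈ Icc (-γ) (-b))
      (fun t ht _ => hlow t (by rwa [sub_add_cancel] at ht)) (fun t hσt ih htT => ?_) ht
    rw [sub_add_cancel] at hσt
    rw [hx.eq_add_mul hf hσ hσt.le fun r hr => hplateau _ (ih r hr (by linarith [hr.2]))]
    exact ⟨by nlinarith [hxσ.1], by nlinarith⟩
  refine ⟨T, hσT, fun t ht => ?_⟩
  rw [hx.eq_add_mul hf hσ ht.1 fun r hr => hplateau _ (hlow' r hr.1 (by linarith [ht.2, hr.2]))]
  linarith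

end Climb

end IsSolOn

/-- Conditions (i)–(iii) on the constants of `HypH''`, under which the delay equation has a slowly
oscillating periodic solution with maximum in `(2a, γ)`. -/
structure Admissible (a c δ γ : ℝ) : Prop where
  c_pos : 0 < c
  c_lt_min : c < min a δ
  four_mul_a_le : 4 * a ≤ γ
  delta_add_le : δ + c / δ * γ ≤ a

namespace Admissible

variable {a c δ γ : ℝ}

lemma c_lt_a (hA : Admissible a c δ γ) : c < a := hA.c_lt_min.trans_le (min_le_left _ _)

lemma c_lt_delta (hA : Admissible a c δ γ) : c < δ := hA.c_lt_min.trans_le (min_le_right _ _)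

lemma a_pos (hA : Admissible a c δ γ) : 0 < a := hA.c_pos.trans hA.c_lt_a

lemma delta_pos (hA : Admissible a c δ γ) : 0 < δ := hA.c_pos.trans hA.c_lt_delta

lemma gamma_pos (hA : Admissible a c δ γ) : 0 < γ := by linarith [hA.four_mul_a_le, hA.a_pos]

lemma delta_lt_gamma (hA : Admissible a c δ γ) : δ < γ := by
  have : 0 < c / δ * γ := mul_pos (div_pos hA.c_pos hA.delta_pos) hA.gamma_pos
  linarith [hA.delta_add_le, hA.four_mul_a_le, hA.a_pos]

lemma of_pos (hγ : 0 < γ) : Admissible (γ / 4) (γ / 64) (γ / 8) γ where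
  c_pos := by positivity
  c_lt_min := lt_min (by linarith) (by linarith)
  four_mul_a_le := by linarith
  delta_add_le := by
    have : γ / 64 / (γ / 8) = 1 / 8 := by field_simp; norm_num
    rw [this]
    linarith

end Admissible

namespace HypH''

variable {f : ℝ → ℝ} {a c δ γ a' c' δ' γ' : ℝ}

lemma neg_le (hA : Admissible a c δ γ) (hH : HypH'' f a c δ γ) {u : ℝ} (hu : u ∈ Icc 0 γ) :
    -γ ≤ f u := by
  obtain ⟨-, hbound, -, hδ⟩ := hH
  rcases le_or_gt u (2 * a) with hle | hgt
  · exact (abs_le.1 (hbound u ⟨hu.1, hle⟩)).1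
  · linarith [hδ u ⟨hgt.le, hu.2⟩, hA.delta_lt_gamma]

lemma mem_Icc_of_nonneg (hA : Admissible a c δ γ) (hneg : ∀ u, u ≠ 0 → u * f u < 0)
    (hH : HypH'' f a c δ γ) {u : ℝ} (hu : u ∈ Icc 0 γ) : f u ∈ Icc (-γ) 0 := by
  refine ⟨neg_le hA hH hu, ?_⟩
  rcases hu.1.eq_or_lt with rfl | hpos
  · exact (self_eq_neg.1 (by simpa using hH.1 0)).le
  · exact (pos_iff_neg_of_mul_neg (hneg u hpos.ne')).1 hpos |>.le

lemma mem_Icc_of_nonpos (hA : Admissible a c δ γ) (hneg : ∀ u, u ≠ 0 → u * f u < 0)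
    (hH : HypH'' f a c δ γ) {u : ℝ} (hu : u ∈ Icc (-γ) 0) : f u ∈ Icc 0 γ := by
  have := mem_Icc_of_nonneg hA hneg hH (u := -u) ⟨by linarith [hu.2], by linarith [hu.1]⟩
  rw [hH.1] at this
  exact ⟨by linarith [this.2], by linarith [this.1]⟩

lemma eq_gamma (hH : HypH'' f a c δ γ) {u : ℝ} (hu : u ∈ Icc (-(2 * a - c)) (-a)) : f u = γ := by
  have := hH.2.2.1 (-u) ⟨by linarith [hu.2], by linarith [hu.1]⟩
  rw [hH.1] at this
  exact neg_inj.1 this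

lemma eq_delta (hH : HypH'' f a c δ γ) {u : ℝ} (hu : u ∈ Icc (-γ) (-(2 * a))) : f u = δ := by
  have := hH.2.2.2 (-u) ⟨by linarith [hu.2], by linarith [hu.1]⟩
  rw [hH.1] at this
  exact neg_inj.1 this

lemma gamma_lt_of_gamma_lt (hA : Admissible a c δ γ) (hA' : Admissible a' c' δ' γ')
    (hH : HypH'' f a c δ γ) (hH' : HypH'' f a' c' δ' γ') (hlt : γ < γ') : γ < a' := by
  by_contra! hle
  have hfa' : f a' = -γ' := hH'.2.2.1 a' ⟨le_rfl, by linarith [hA'.c_lt_a]⟩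
  linarith [neg_le hA hH ⟨hA'.a_pos.le, hle⟩]

end HypH''

section Layer

variable {f x : ℝ → ℝ} {a c δ γ T : ℝ}

/-- The increment of a solution while its delayed value climbs with speed `δ` through the layer
`[-2a, -2a + c]`, on which the values of `f` are not prescribed by `HypH''`. -/
noncomputable def layerRise (f : ℝ → ℝ) (a c δ : ℝ) : ℝ :=
  ∫ s in (0 : ℝ)..(c / δ), f (-(2 * a) + δ * s)

lemma layerRise_mem_Icc (hA : Admissible a c δ γ) (hf : Continuous f)
    (hfeed : ∀ u ∈ Icc (-γ) 0, f u ∈ Icc 0 γ) : layerRise f a c δ ∈ Icc 0 (c / δ * γ) := by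
  have hcδ : 0 ≤ c / δ := (div_pos hA.c_pos hA.delta_pos).le
  have hfs : ∀ s ∈ Icc 0 (c / δ), f (-(2 * a) + δ * s) ∈ Icc 0 γ := fun s hs => by
    have hs1 : δ * s ≤ c := (le_div_iff₀' hA.delta_pos).1 hs.2
    have hs0 : 0 ≤ δ * s := mul_nonneg hA.delta_pos.le hs.1
    exact hfeed _ ⟨by linarith [hA.four_mul_a_le, hA.a_pos], by linarith [hA.c_lt_a, hA.a_pos]⟩
  refine ⟨intervalIntegral.integral_nonneg hcδ fun s hs => (hfs s hs).1, ?_⟩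
  calc layerRise f a c δ ≤ ∫ _ in (0 : ℝ)..(c / δ), γ :=
        intervalIntegral.integral_mono_on hcδ (Continuous.intervalIntegrable (by fun_prop) _ _)
          (by simp) fun s hs => (hfs s hs).2
    _ = c / δ * γ := by simp

namespace IsSolOn

lemma apply_eq_add_layerRise (hA : Admissible a c δ γ) (hf : Continuous f) (hx : IsSolOn f x)
    (hT : 0 ≤ T) (hclimb : ∀ t ∈ Icc T (T + 1), x t = -(2 * a) + δ * (t - T)) :
    x (T + 1 + c / δ) = -(2 * a) + δ + layerRise f a c δ := by
  have hcδ : 0 < c / δ := div_pos hA.c_pos hA.delta_pos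
  have hcδ1 : c / δ < 1 := (div_lt_one hA.delta_pos).2 hA.c_lt_delta
  have hint := hx.integral_eq_sub_of_eqOn hf (y := fun t => -(2 * a) + δ * (t - T))
    (by linarith : 0 ≤ T + 1) (by linarith : T + 1 ≤ T + 1 + c / δ)
    fun t ht => hclimb t ⟨by linarith [ht.1], by linarith [ht.2]⟩
  have hshift := intervalIntegral.integral_comp_sub_right (a := T + 1) (b := T + 1 + c / δ)
    (fun s => f (-(2 * a) + δ * s)) (T + 1)
  rw [sub_self, add_sub_cancel_left] at hshift
  have hxT := hclimb (T + 1) ⟨by linarith, le_rfl⟩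
  simp only [sub_sub, add_comm 1 T, hshift] at hint
  rw [layerRise]
  linarith

lemma mem_Icc_of_climb (hA : Admissible a c δ γ) (hf : Continuous f)
    (hfeed : ∀ u ∈ Icc (-γ) 0, f u ∈ Icc 0 γ) (hx : IsSolOn f x) (hT : 0 ≤ T)
    (hclimb : ∀ t ∈ Icc T (T + 1), x t = -(2 * a) + δ * (t - T)) {t : ℝ}
    (ht : t ∈ Icc (T + c / δ) (T + 1 + c / δ)) : x t ∈ Icc (-(2 * a - c)) (-a) := by
  have hδ := hA.delta_pos
  have hcδ1 : c / δ < 1 := (div_lt_one hδ).2 hA.c_lt_delta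
  have hc : δ * (c / δ) = c := mul_div_cancel₀ c hδ.ne'
  have hrise := layerRise_mem_Icc hA hf hfeed
  have hδa : δ ≤ a := by linarith [hA.delta_add_le, hrise.1, hrise.2]
  rcases le_or_gt t (T + 1) with htT | htT
  · rw [hclimb t ⟨by linarith [ht.1, div_pos hA.c_pos hδ], htT⟩]
    exact ⟨by nlinarith [ht.1], by nlinarith⟩
  have hmono : ∀ s r, T + 1 ≤ s → s ≤ r → r ≤ T + 1 + c / δ → x s ≤ x r := by
    intro s r hs hsr hr
    have := hx.sub_mem_Icc hf (by linarith) hsr (l := 0) (k := γ) fun q hq => by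
      have hqT : 0 ≤ q - T := by linarith [hq.1]
      rw [hclimb q ⟨by linarith, by linarith [hq.2]⟩]
      exact hfeed _ ⟨by nlinarith [hA.four_mul_a_le, hA.a_pos],
        by nlinarith [hq.2, hA.c_lt_a, hA.a_pos]⟩
    linarith [this.1]
  have hstart := hclimb (T + 1) ⟨by linarith, le_rfl⟩
  have hend := hx.apply_eq_add_layerRise hA hf hT hclimb
  have hlow := hmono (T + 1) t le_rfl htT.le ht.2
  have hupp := hmono t (T + 1 + c / δ) htT.le ht.2 le_rfl
  exact ⟨by linarith [hA.c_lt_delta], by linarith [hA.delta_add_le, hrise.2]⟩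

end IsSolOn

end Layer

/-! ### Slowly oscillating periodic solutions -/

section HalfWave

variable {f x : ℝ → ℝ} {a c δ γ z : ℝ}

lemma IsSolOn.mem_Ioc_neg_two_mul (hA : Admissible a c δ γ) (hf : Continuous f)
    (hneg : ∀ u, u ≠ 0 → u * f u < 0) (hH : HypH'' f a c δ γ) (hx : IsSolOn f x)
    (hlin : EqOn x (fun t => γ * (z - 1 - t)) (Icc (-1) 0)) (hz : 0 < z)
    (hza : z ≤ 2 * a / γ) {t : ℝ} (ht : t ∈ Icc (z + 2 * a / γ - 1) (z + 2 * a / γ)) :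
    x t ∈ Ioc (-γ) (-(2 * a)) := by
  have hτ : 2 * (2 * a / γ) ≤ 1 := by
    rw [← mul_div_assoc, div_le_one hA.gamma_pos]
    linarith [hA.four_mul_a_le]
  have := hx.mem_Ioc_of_linear_history hf hH.1 (fun u => hH.mem_Icc_of_nonneg hA hneg)
    (fun u => hH.mem_Icc_of_nonpos hA hneg) hlin hA.gamma_pos hz hza hτ ht
  rwa [mul_div_cancel₀ _ hA.gamma_pos.ne'] at this

lemma IsSolOn.exists_return (hA : Admissible a c δ γ) (hf : Continuous f)
    (hneg : ∀ u, u ≠ 0 → u * f u < 0) (hH : HypH'' f a c δ γ) (hx : IsSolOn f x)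
    (hlin : EqOn x (fun t => γ * (z - 1 - t)) (Icc (-1) 0)) (hz : 0 < z)
    (hza : z ≤ 2 * a / γ) :
    ∃ E, 1 < E ∧ x E = -(2 * a) + δ + layerRise f a c δ ∧
      (∀ t ∈ Icc (z + 2 * a / γ - 1) E, x t ∈ Ioc (-γ) (-a)) ∧
      ∀ t ∈ Icc E (E + 1), x t = x E + γ * (t - E) := by
  have ha := hA.a_pos
  have hδ := hA.delta_pos
  have hγ := hA.gamma_pos
  have hfeed : ∀ u ∈ Icc (-γ) 0, f u ∈ Icc 0 γ := fun u => hH.mem_Icc_of_nonpos hA hneg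
  have hcδ0 : 0 < c / δ := div_pos hA.c_pos hδ
  have hcδ : δ * (c / δ) = c := mul_div_cancel₀ c hδ.ne'
  obtain ⟨σ, hσ⟩ : ∃ σ, σ = z + 2 * a / γ := ⟨_, rfl⟩
  have hσ0 : 0 < σ := by linarith [div_pos (by linarith : 0 < 2 * a) hγ]
  have hlow : ∀ t ∈ Icc (σ - 1) σ, x t ∈ Ioc (-γ) (-(2 * a)) := fun t ht =>
    hx.mem_Ioc_neg_two_mul hA hf hneg hH hlin hz hza (hσ ▸ ht)
  obtain ⟨T, hσT, hclimb⟩ := hx.exists_eq_add_mul_of_plateau hf hδ hσ0.le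
    (fun u => hH.eq_delta) fun t ht => Ioc_subset_Icc_self (hlow t ht)
  have hclimbT : ∀ t ∈ Icc T (T + 1), x t = -(2 * a) + δ * (t - T) :=
    fun t ht => hclimb t ⟨hσT.trans ht.1, ht.2⟩
  have hlayer := fun t => hx.mem_Icc_of_climb (t := t) hA hf hfeed (hσ0.le.trans hσT) hclimbT
  refine ⟨T + 1 + c / δ, by linarith,
    hx.apply_eq_add_layerRise hA hf (hσ0.le.trans hσT) hclimbT, fun t ht => ?_, fun t ht => ?_⟩
  · rw [← hσ] at ht
    rcases le_or_gt t σ with htσ | htσ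
    · have := hlow t ⟨ht.1, htσ⟩
      exact ⟨this.1, by linarith [this.2]⟩
    rcases le_or_gt t (T + c / δ) with htT | htT
    · have hcδ1 : c / δ < 1 := (div_lt_one hδ).2 hA.c_lt_delta
      have hxσ := (hlow σ ⟨by linarith, le_rfl⟩).1
      rw [hclimb σ ⟨le_rfl, by linarith⟩] at hxσ
      rw [hclimb t ⟨htσ.le, by linarith⟩]
      exact ⟨by nlinarith, by nlinarith [hA.c_lt_a]⟩
    · have := hlayer t ⟨htT.le, ht.2⟩
      exact ⟨by linarith [this.1, hA.c_pos, hA.four_mul_a_le], this.2⟩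
  · refine hx.eq_add_mul hf (by linarith) ht.1 fun r hr => hH.eq_gamma (hlayer r ⟨?_, ?_⟩)
    · linarith [hr.1]
    · linarith [hr.2, ht.2]

lemma exists_half_wave (hA : Admissible a c δ γ) (hf : Continuous f)
    (hneg : ∀ u, u ≠ 0 → u * f u < 0) (hH : HypH'' f a c δ γ) :
    ∃ x h, 1 < h ∧ IsSolOn f x ∧ (∀ t ∈ Icc (-1) 0, x (t + h) = -x t) ∧
      (∀ t ∈ Icc (-1) (h - 1), |x t| < γ) ∧
      {t ∈ Icc (-1) (h - 1) | x t = 0}.Subsingleton ∧ x 0 < -(2 * a) := by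
  have ha := hA.a_pos
  have hγ := hA.gamma_pos
  have hrise := layerRise_mem_Icc hA hf fun u => hH.mem_Icc_of_nonpos hA hneg
  -- The amplitude of the history is what the solution is left with when it has passed the layer.
  obtain ⟨z, hz⟩ : ∃ z, z = (2 * a - δ - layerRise f a c δ) / γ := ⟨_, rfl⟩
  have hγz : γ * z = 2 * a - δ - layerRise f a c δ := by rw [hz, mul_div_cancel₀ _ hγ.ne']
  have hz0 : 0 < z := by
    rw [hz]
    exact div_pos (by linarith [hA.delta_add_le, hrise.2]) hγ
  have hza : z ≤ 2 * a / γ := by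
    rw [hz]
    gcongr
    linarith [hA.delta_pos, hrise.1]
  obtain ⟨x, hx, hlin⟩ := exists_isSolOn (φ := fun t => γ * (z - 1 - t)) hf (by fun_prop)
  obtain ⟨E, hE, hxE, hwave, hup⟩ := hx.exists_return hA hf hneg hH hlin hz0 hza
  have hγτ : γ * (2 * a / γ) = 2 * a := mul_div_cancel₀ _ hγ.ne'
  have hsplit : ∀ t ∈ Icc (-1) (E + 1 - 1),
      x t = γ * (z - 1 - t) ∧ t < 0 ∨ x t ∈ Ioc (-γ) (-a) := by
    intro t ht
    rcases lt_or_ge t (z + 2 * a / γ - 1) with hlt | hge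
    · have ht0 : t < 0 := by nlinarith [hA.four_mul_a_le]
      exact Or.inl ⟨hlin ⟨ht.1, ht0.le⟩, ht0⟩
    · exact Or.inr (hwave t ⟨hge, by linarith [ht.2]⟩)
  refine ⟨x, E + 1, by linarith, hx, fun t ht => ?_, fun t ht => ?_, ?_, ?_⟩
  · rw [hup _ ⟨by linarith [ht.1], by linarith [ht.2]⟩, hxE, hlin ht]
    linarith
  · rw [abs_lt]
    rcases hsplit t ht with ⟨hxt, ht0⟩ | hxt
    · rw [hxt]
      exact ⟨by nlinarith, by nlinarith [ht.1, hA.delta_pos, hrise.1, hA.four_mul_a_le]⟩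
    · exact ⟨hxt.1, by linarith [hxt.2]⟩
  · have hzero : ∀ t ∈ {t ∈ Icc (-1) (E + 1 - 1) | x t = 0}, t = z - 1 := by
      rintro t ⟨ht, hxt0⟩
      rcases hsplit t ht with ⟨hxt, -⟩ | hxt
      · rw [hxt0, eq_comm, mul_eq_zero, sub_eq_zero] at hxt
        exact (hxt.resolve_left hγ.ne').symm
      · linarith [hxt.2]
    exact fun s hs t ht => (hzero s hs).trans (hzero t ht).symm
  · rw [hlin ⟨by norm_num, le_rfl⟩]
    linarith [hA.four_mul_a_le, hA.delta_pos, hrise.1]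

lemma exists_isSOP (hA : Admissible a c δ γ) (hf : Continuous f)
    (hneg : ∀ u, u ≠ 0 → u * f u < 0) (hH : HypH'' f a c δ γ) :
    ∃ p, IsSOP f p ∧ (∃ t, 2 * a < p t) ∧ ∀ t, p t < γ := by
  obtain ⟨x, h, hh, hx, hx_anti, hx_lt, hx_zero, hx0⟩ := exists_half_wave hA hf hneg hH
  have hh0 : 0 < h := by linarith
  obtain ⟨p, hp, hpx, hd⟩ := hx.exists_antiperiodic_extension hf hH.1 hh0 hx_anti
  have hsub : Ico (-1) (-1 + h) ⊆ Icc (-1) (h - 1) := fun t ht => ⟨ht.1, by linarith [ht.2]⟩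
  have hp0 : p 0 < -(2 * a) := (hpx (by simp)).trans_lt hx0
  refine ⟨p, isSOP_of_antiperiodic hh hd hp ⟨0, by linarith [hA.a_pos]⟩ (b := -1)
    (hx_zero.anti ?_), ⟨0 + h, by linarith [hp 0]⟩, fun t => ?_⟩
  · exact fun t ht => ⟨hsub ht.1, (hpx ht.1.1).symm.trans ht.2⟩
  · have habs : Function.Periodic (fun t => |p t|) h := fun t => by simp only [hp t, abs_neg]
    obtain ⟨s, hs, hts⟩ := habs.exists_mem_Ico hh0 t (-1)
    calc p t ≤ |p t| := le_abs_self _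
      _ = |x s| := by rw [hts, hpx hs.1]
      _ < γ := hx_lt s (hsub hs)

end HalfWave

lemma ne_of_forall_lt_of_exists_lt {p q : ℝ → ℝ} {b : ℝ} (hp : ∀ t, p t < b) (hq : ∃ t, b < q t) :
    (∀ r, ∃ t, q t ≠ p (t + r)) ∧ ∀ r, ∃ t, p t ≠ q (t + r) := by
  obtain ⟨t, ht⟩ := hq
  refine ⟨fun r => ⟨t, ((hp _).trans ht).ne'⟩, fun r => ⟨t - r, ?_⟩⟩
  rw [sub_add_cancel]
  exact ((hp _).trans ht).ne

theorem statement_18_general {ι : Type*} {S : Set ι} {a c δ γ : ι → ℝ}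
    (hA : ∀ i ∈ S, Admissible (a i) (c i) (δ i) (γ i)) {f : ℝ → ℝ} (hf : Continuous f)
    (hneg : ∀ u, u ≠ 0 → u * f u < 0) (hH : ∀ i ∈ S, HypH'' f (a i) (c i) (δ i) (γ i)) :
    ∃ p : ι → ℝ → ℝ,
      (∀ i ∈ S, IsSOP f (p i) ∧ (∃ t, 2 * a i < p i t) ∧ ∀ t, p i t < γ i) ∧
      ∀ i ∈ S, ∀ j ∈ S, γ i ≠ γ j → ∀ s, ∃ t, p j t ≠ p i (t + s) := by
  have hex : ∀ i, ∃ p, i ∈ S → IsSOP f p ∧ (∃ t, 2 * a i < p t) ∧ ∀ t, p t < γ i := fun i => by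
    by_cases hi : i ∈ S
    · obtain ⟨p, hp⟩ := exists_isSOP (hA i hi) hf hneg (hH i hi)
      exact ⟨p, fun _ => hp⟩
    · exact ⟨0, fun hi' => absurd hi' hi⟩
  choose p hp using hex
  have hsep : ∀ i ∈ S, ∀ j ∈ S, γ i < γ j →
      (∀ s, ∃ t, p j t ≠ p i (t + s)) ∧ ∀ s, ∃ t, p i t ≠ p j (t + s) := by
    intro i hi j hj hlt
    obtain ⟨t, ht⟩ := (hp j hj).2.1
    have hij := HypH''.gamma_lt_of_gamma_lt (hA i hi) (hA j hj) (hH i hi) (hH j hj) hlt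
    exact ne_of_forall_lt_of_exists_lt (hp i hi).2.2 ⟨t, by linarith [(hA j hj).a_pos]⟩
  exact ⟨p, hp, fun i hi j hj hij => hij.lt_or_gt.elim (fun hlt => (hsep i hi j hj hlt).1)
    fun hgt => (hsep j hj i hi hgt).2⟩

lemma injOn_Icc_of_succ_lt_div {γ : ℕ → ℝ} {r : ℝ} {k N : ℕ} (hr : 1 ≤ r)
    (hpos : ∀ n ∈ Icc k N, 0 < γ n) (hlt : ∀ n ∈ Ico k N, γ (n + 1) < γ n / r) :
    InjOn γ (Icc k N) := by
  refine (strictAntiOn_of_succ_lt ordConnected_Icc fun n _ hn hn' => ?_).injOn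
  exact (hlt n ⟨hn.1, hn'.2⟩).trans_le (div_le_self (hpos n hn).le hr)

theorem statement_18 (M : ℕ) (hM : 1 < M) (γ : ℕ → ℝ)
    (hγpos : ∀ n : ℕ, 1 ≤ n → n ≤ M → 0 < γ n)
    (hγdec : ∀ n : ℕ, 1 ≤ n → n < M → γ (n + 1) < γ n / 4)
    (f : ℝ → ℝ) (hH : HypH f)
    (hH'' : ∀ n : ℕ, 1 ≤ n → n ≤ M - 1 →
      HypH'' f (γ n / 4) (γ n / 64) (γ n / 8) (γ n)) :
    ∃ p : ℕ → ℝ → ℝ,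
      (∀ n : ℕ, 1 ≤ n → n ≤ M - 1 → IsSOP f (p n) ∧
        (∃ t : ℝ, 2 * (γ n / 4) < p n t) ∧ ∀ t : ℝ, p n t < γ n) ∧
      ∀ m n : ℕ, 1 ≤ m → m ≤ M - 1 → 1 ≤ n → n ≤ M - 1 → m ≠ n →
        ∀ s : ℝ, ∃ t : ℝ, p n t ≠ p m (t + s) := by
  have hsub : Icc 1 (M - 1) ⊆ Icc 1 M := Icc_subset_Icc_right (M.sub_le 1)
  have hinj : InjOn γ (Icc 1 M) := injOn_Icc_of_succ_lt_div (by norm_num)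
    (fun n hn => hγpos n hn.1 hn.2) fun n hn => hγdec n hn.1 hn.2
  obtain ⟨p, hp, hne⟩ := statement_18_general (S := Icc 1 (M - 1))
    (fun n hn => .of_pos (hγpos n hn.1 (hsub hn).2)) hH.1 hH.2.1 fun n hn => hH'' n hn.1 hn.2
  exact ⟨p, fun n h1 h2 => hp n ⟨h1, h2⟩, fun m n hm hm' hn hn' hmn =>
    hne m ⟨hm, hm'⟩ n ⟨hn, hn'⟩ (hinj.ne (hsub ⟨hm, hm'⟩) (hsub ⟨hn, hn'⟩) hmn)⟩
end
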